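/- arXiv:0802.3737 — 4 statements merged into one kernel-verified Lean document; each statement's English description precedes it below -/
import Mathlib

section
/- Let I be a matroidal ideal of degree 2 in R = K[x_1, ..., x_n] with supp(I) = {x_1, ..., x_n}, and let G be the simple graph on vertex set {x_1, ..., x_n} whose edges are the pairs {x_i, x_j} with x_i x_j ∈ I. Then there are positive integers t_1, ..., t_m with n = t_1 + ⋯ + t_m such that G is the complete multipartite graph K_{t_1, t_2, ..., t_m}. In particular, if I is unmixed then all t_i are equal, i.e. G = K_{t, t, ..., t}. -/
/-!
The graph part rests on transitivity of non-adjacency. A pair is an edge of `G` exactly when its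
support lies in `B`. If `{a, c}` is a basis and `b` is any variable, pick a basis `{b, d}`; unless
`d ∈ {a, c}`, exchanging `d` against an element of `{a, c}` shows that `b` is adjacent to `a` or
`c`. So non-adjacency is an equivalence relation and `G` is complete multipartite, the parts being
the equivalence classes.

For the unmixed part, let `c` be a variable and `N(c)` its set of neighbours. The ideal
`P = (x_j : j ∈ N(c))` is prime, contains `I` (no edge lies inside the class of `c`, the complement
of `N(c)`), and equals `I : x_c`; hence it is an associated prime of `I`. Its height is `|N(c)|`,
by Krull's height theorem and the chain obtained by adding the variables one at a time. If `I` is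
unmixed, all vertices therefore have the same degree, so all classes have the same size.
-/

open MvPolynomial

/-- The square-free monomial `∏ i in S, X i`. -/
noncomputable def sqMon {n : ℕ} (K : Type*) [Field K] (S : Finset (Fin n)) :
    MvPolynomial (Fin n) K := ∏ i ∈ S, X i

/-- The basis-exchange property for a family of supports. -/
def ExchangeProp {n : ℕ} (B : Finset (Finset (Fin n))) : Prop :=
  ∀ u ∈ B, ∀ v ∈ B, ∀ i ∈ u, i ∉ v → ∃ j ∈ v, j ∉ u ∧ insert j (u.erase i) ∈ B

/-- `I` is a matroidal ideal of degree `d`, whose minimal monomial generators are the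
square-free monomials with supports in `B`. -/
def IsMatroidal {n : ℕ} (K : Type*) [Field K] (I : Ideal (MvPolynomial (Fin n) K))
    (B : Finset (Finset (Fin n))) (d : ℕ) : Prop :=
  B.Nonempty ∧ (∀ S ∈ B, S.card = d) ∧ ExchangeProp B ∧
    I = Ideal.span (sqMon K '' (B : Set (Finset (Fin n))))

/-- `supp(I) = {x_1, …, x_n}` for a matroidal ideal with generating supports `B`. -/
def FullSupport {n : ℕ} (B : Finset (Finset (Fin n))) : Prop :=
  ∀ i : Fin n, ∃ S ∈ B, i ∈ S

/-- The height of an ideal: the infimum of the heights of the primes containing it. -/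
noncomputable def idealHeight {A : Type*} [CommRing A] (I : Ideal A) : ℕ∞ :=
  ⨅ (p : PrimeSpectrum A) (_ : I ≤ p.asIdeal), Order.height p

/-- The `J`-depth of the ring `A`: the supremum of the lengths of regular sequences
contained in `J`. -/
noncomputable def ringDepth (A : Type*) [CommRing A] (J : Ideal A) : ℕ∞ :=
  ⨆ (rs : {l : List A // (∀ r ∈ l, r ∈ J) ∧ RingTheory.Sequence.IsRegular A l}),
    (rs.1.length : ℕ∞)

/-- A commutative ring is Cohen–Macaulay if at every maximal ideal the depth of the
localization equals its Krull dimension. -/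
def IsCohenMacaulayRing (A : Type*) [CommRing A] : Prop :=
  ∀ (p : Ideal A) (hp : p.IsMaximal),
    letI : p.IsPrime := hp.isPrime
    (ringDepth (Localization.AtPrime p)
        (IsLocalRing.maximalIdeal (Localization.AtPrime p)) : WithBot ℕ∞)
      = ringKrullDim (Localization.AtPrime p)

/-- The arithmetical rank of an ideal. -/
noncomputable def araIdeal {A : Type*} [CommRing A] (I : Ideal A) : ℕ :=
  sInf {m : ℕ | ∃ f : Fin m → A, (Ideal.span (Set.range f)).radical = I.radical}

/-- An ideal is unmixed if all of its associated primes have the same height. -/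
def IsUnmixed {A : Type*} [CommRing A] (I : Ideal A) : Prop :=
  ∀ p ∈ associatedPrimes A (A ⧸ I), ∀ q ∈ associatedPrimes A (A ⧸ I),
    idealHeight p = idealHeight q

/-- The square-free Veronese ideal of degree `d` in all the variables. -/
noncomputable def sqVeronese {n : ℕ} (K : Type*) [Field K] (d : ℕ) :
    Ideal (MvPolynomial (Fin n) K) :=
  Ideal.span (sqMon K '' {S : Finset (Fin n) | S.card = d})

/-- The ordering `u` of the generating supports, together with the variable sets `V`,
witnesses that the square-free monomial ideal generated by `sqMon K ∘ u` has linear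
quotients: each colon ideal `⟨u_0, …, u_{j-1}⟩ : u_j` is generated by the variables in
`V j`. -/
def LinearQuotientWitness {n s : ℕ} (K : Type*) [Field K]
    (u : Fin s → Finset (Fin n)) (V : Fin s → Finset (Fin n)) : Prop :=
  ∀ j : Fin s,
    (Ideal.span (sqMon K '' (u '' {k | k < j}))).colon (Ideal.span {sqMon K (u j)})
      = Ideal.span ((fun i => (X i : MvPolynomial (Fin n) K)) '' (V j : Set (Fin n)))

/-- The linear quotient index `q(I)` attached to a linear quotient witness:
the maximum, over `j ≥ 1`, of the number of variables generating the `j`-th colon ideal. -/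
def lqIndex {n s : ℕ} (V : Fin s → Finset (Fin n)) : ℕ :=
  (Finset.univ.filter fun j : Fin s => (j : ℕ) ≠ 0).sup fun j => (V j).card

open CategoryTheory in
/-- The module `M` has projective dimension at most `k`. -/
def HasProjDimLE {A : Type*} [CommRing A] (M : ModuleCat A) (k : ℕ) : Prop :=
  ∃ P : ProjectiveResolution M, ∀ i : ℕ, k < i → Limits.IsZero (P.complex.X i)

/-- The ideal generated by the variables `X i`, `i ∈ A`. -/
noncomputable def varIdeal {n : ℕ} (K : Type*) [Field K] (A : Finset (Fin n)) :
    Ideal (MvPolynomial (Fin n) K) :=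
  Ideal.span ((fun i => (X i : MvPolynomial (Fin n) K)) '' (A : Set (Fin n)))

/-! ### Ideals generated by variables -/

/-- The substitution `x_i ↦ 0` for `i ∈ A`, fixing the other variables. -/
noncomputable def killVars {n : ℕ} (K : Type*) [Field K] (A : Finset (Fin n)) :
    MvPolynomial (Fin n) K →ₐ[K] MvPolynomial (Fin n) K :=
  aeval fun i => if i ∈ A then 0 else X i

lemma varIdeal_eq_ker {n : ℕ} (K : Type*) [Field K] (A : Finset (Fin n)) :
    varIdeal K A = RingHom.ker (killVars K A) := by
  apply le_antisymm
  · rw [varIdeal, Ideal.span_le]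
    rintro _ ⟨i, hi, rfl⟩
    have hi' : i ∈ A := hi
    simp [RingHom.mem_ker, killVars, hi']
  · intro f hf
    -- Every polynomial is congruent to its image under `killVars` modulo `varIdeal`.
    have key : (Ideal.Quotient.mkₐ K (varIdeal K A)).comp (killVars K A) =
        Ideal.Quotient.mkₐ K (varIdeal K A) := by
      ext i
      by_cases h : i ∈ A
      · simp only [killVars, AlgHom.comp_apply, aeval_X, h, if_true, map_zero]
        symm
        exact Ideal.Quotient.eq_zero_iff_mem.2 (Ideal.subset_span ⟨i, h, rfl⟩)
      · simp [killVars, h]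
    have h2 := DFunLike.congr_fun key f
    rw [RingHom.mem_ker] at hf
    rw [AlgHom.comp_apply, hf, map_zero] at h2
    exact Ideal.Quotient.eq_zero_iff_mem.1 h2.symm

instance varIdeal_isPrime {n : ℕ} (K : Type*) [Field K] (A : Finset (Fin n)) :
    (varIdeal K A).IsPrime := by
  rw [varIdeal_eq_ker]
  exact RingHom.ker_isPrime _

lemma X_mem_varIdeal {n : ℕ} {K : Type*} [Field K] {A : Finset (Fin n)} {i : Fin n} :
    (X i : MvPolynomial (Fin n) K) ∈ varIdeal K A ↔ i ∈ A := by
  rw [varIdeal_eq_ker, RingHom.mem_ker]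
  by_cases h : i ∈ A <;> simp [killVars, h]

lemma card_le_height_varIdeal {n : ℕ} (K : Type*) [Field K] (A : Finset (Fin n)) :
    (A.card : ℕ∞) ≤ (varIdeal K A).height := by
  induction A using Finset.induction_on with
  | empty => simp
  | insert a A ha ih =>
    have hlt : varIdeal K A < varIdeal K (insert a A) := by
      refine lt_of_le_of_ne (Ideal.span_mono (Set.image_mono (by simp))) fun h => ha ?_
      rw [← X_mem_varIdeal (K := K), h, X_mem_varIdeal]
      simp
    rw [Finset.card_insert_of_notMem ha]
    push_cast
    exact (add_le_add_left ih 1).trans (Ideal.height_add_one_le_of_lt_of_isPrime hlt)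

lemma height_varIdeal {n : ℕ} (K : Type*) [Field K] (A : Finset (Fin n)) :
    (varIdeal K A).height = A.card := by
  refine le_antisymm ?_ (card_le_height_varIdeal K A)
  classical
  have hmin : varIdeal K A ∈ (Ideal.span
      ((A.image fun i => (X i : MvPolynomial (Fin n) K) : Finset _) :
        Set (MvPolynomial (Fin n) K))).minimalPrimes := by
    rw [Finset.coe_image]
    change varIdeal K A ∈ (varIdeal K A).minimalPrimes
    rw [Ideal.minimalPrimes_eq_subsingleton_self]
    rfl
  exact (Ideal.height_le_card_of_mem_minimalPrimes_span_finset hmin).trans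
    (by exact_mod_cast Finset.card_image_le)

lemma idealHeight_eq_height {A : Type*} [CommRing A] (I : Ideal A) [hI : I.IsPrime] :
    idealHeight I = I.height := by
  have h := PrimeSpectrum.height_eq_orderHeight (⟨I, hI⟩ : PrimeSpectrum A)
  change I.height = _ at h
  rw [idealHeight, h]
  refine le_antisymm (iInf₂_le (⟨I, hI⟩ : PrimeSpectrum A) le_rfl) (le_iInf₂ fun p hp => ?_)
  rw [← h, ← PrimeSpectrum.height_eq_orderHeight]
  exact Ideal.height_mono hp

/-! ### The graph of a matroidal ideal of degree two -/

/-- If `{x, y}` is not a basis, the point with coordinates `1` at `x, y` and `0` elsewhere is a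
zero of every generator of `I`, but not of `x * y`. -/
lemma mul_mem_iff {K : Type*} [Field K] {n : ℕ} {I : Ideal (MvPolynomial (Fin n) K)}
    {B : Finset (Finset (Fin n))} (hI : IsMatroidal K I B 2) {x y : Fin n} (hxy : x ≠ y) :
    (X x * X y : MvPolynomial (Fin n) K) ∈ I ↔ {x, y} ∈ B := by
  obtain ⟨-, hcard, -, rfl⟩ := hI
  constructor
  · intro h
    by_contra hB
    let φ : MvPolynomial (Fin n) K →ₐ[K] K :=
      aeval fun i => if i ∈ ({x, y} : Finset (Fin n)) then 1 else 0
    have hle : Ideal.span (sqMon K '' (B : Set (Finset (Fin n)))) ≤ RingHom.ker φ := by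
      rw [Ideal.span_le]
      rintro _ ⟨S, hS, rfl⟩
      have hS' : S ∈ B := hS
      have hnot : ¬ S ⊆ {x, y} := fun hsub => hB <| by
        rwa [← Finset.eq_of_subset_of_card_le hsub
          (by rw [hcard S hS', Finset.card_pair hxy])]
      obtain ⟨i, hiS, hi⟩ := Finset.not_subset.1 hnot
      change φ (sqMon K S) = 0
      rw [sqMon, map_prod]
      exact Finset.prod_eq_zero hiS (by simp only [φ, aeval_X, hi, if_false])
    have h0 : φ (X x * X y) = 0 := hle h
    simp [φ] at h0
  · intro h
    refine Ideal.subset_span ⟨_, h, ?_⟩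
    rw [sqMon, Finset.prod_pair hxy]

lemma adj_or_adj {n : ℕ} {B : Finset (Finset (Fin n))} (hcard : ∀ S ∈ B, S.card = 2)
    (hex : ExchangeProp B) (hsupp : FullSupport B) {G : SimpleGraph (Fin n)}
    (hG : ∀ x y, G.Adj x y ↔ x ≠ y ∧ {x, y} ∈ B) {a c : Fin n} (hac : G.Adj a c) (b : Fin n) :
    G.Adj a b ∨ G.Adj b c := by
  obtain ⟨S, hS, hbS⟩ := hsupp b
  obtain ⟨d, hbd, rfl⟩ : ∃ d, b ≠ d ∧ S = {b, d} := by
    obtain ⟨x, y, hxy, rfl⟩ := Finset.card_eq_two.1 (hcard S hS)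
    rcases Finset.mem_insert.1 hbS with rfl | h
    · exact ⟨y, hxy, rfl⟩
    · rw [Finset.mem_singleton] at h
      subst h
      exact ⟨x, hxy.symm, Finset.pair_comm _ _⟩
  have hbd' : G.Adj b d := (hG _ _).2 ⟨hbd, hS⟩
  by_cases hda : d = a
  · subst hda; exact .inl hbd'.symm
  by_cases hdc : d = c
  · subst hdc; exact .inr hbd'
  obtain ⟨j, hj, hjn, hins⟩ :=
    hex _ hS _ ((hG _ _).1 hac).2 d (by simp) (by simp [hda, hdc])
  have hjb : j ≠ b := by rintro rfl; simp at hjn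
  have herase : ({b, d} : Finset (Fin n)).erase d = {b} := by
    ext z
    simp only [Finset.mem_erase, Finset.mem_insert, Finset.mem_singleton]
    grind
  rw [herase] at hins
  have hjb' : G.Adj j b := (hG _ _).2 ⟨hjb, hins⟩
  rcases Finset.mem_insert.1 hj with rfl | h
  · exact .inl hjb'
  · rw [Finset.mem_singleton] at h
    subst h
    exact .inr hjb'.symm

lemma sum_card_and_iso_of_labelling {n m : ℕ} (G : SimpleGraph (Fin n)) (f : Fin n → Fin m)
    (hf : ∀ x y, G.Adj x y ↔ f x ≠ f y) (t : Fin m → ℕ)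
    (ht : ∀ i, Fintype.card {x // f x = i} = t i) :
    (∑ i, t i) = n ∧
      Nonempty (G ≃g SimpleGraph.completeMultipartiteGraph fun i : Fin m => Fin (t i)) := by
  let e : Fin n ≃ Σ i : Fin m, Fin (t i) :=
    (Equiv.sigmaFiberEquiv f).symm.trans
      (Equiv.sigmaCongrRight fun i => Fintype.equivFinOfCardEq (ht i))
  refine ⟨?_, ⟨⟨e, ?_⟩⟩⟩
  · simpa using (Fintype.card_congr e).symm
  · intro x y
    rw [hf]
    rfl

/-- The prime generated by the neighbours of `c` is the colon ideal `I : x_c`, hence an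
associated prime of `I`. -/
lemma varIdeal_mem_associatedPrimes {K : Type*} [Field K] {n : ℕ}
    {I : Ideal (MvPolynomial (Fin n) K)} {B : Finset (Finset (Fin n))}
    (hI : IsMatroidal K I B 2) {G : SimpleGraph (Fin n)}
    (hG : ∀ x y, G.Adj x y ↔ x ≠ y ∧ {x, y} ∈ B)
    (hadj : ∀ a b c, G.Adj a c → G.Adj a b ∨ G.Adj b c) (c : Fin n) (A : Finset (Fin n))
    (hA : ∀ x, x ∈ A ↔ G.Adj c x) :
    varIdeal K A ∈ associatedPrimes (MvPolynomial (Fin n) K) (MvPolynomial (Fin n) K ⧸ I) := by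
  have hle : I ≤ varIdeal K A := by
    rw [hI.2.2.2, Ideal.span_le]
    rintro _ ⟨S, hS, rfl⟩
    obtain ⟨x, y, hxy, rfl⟩ := Finset.card_eq_two.1 (hI.2.1 S hS)
    change sqMon K {x, y} ∈ varIdeal K A
    rw [sqMon, Finset.prod_pair hxy]
    rcases hadj x c y ((hG _ _).2 ⟨hxy, hS⟩) with h | h
    · exact Ideal.mul_mem_right _ _ (X_mem_varIdeal.2 ((hA x).2 h.symm))
    · exact Ideal.mul_mem_left _ _ (X_mem_varIdeal.2 ((hA y).2 h))
  have hcolon : (⊥ : Submodule (MvPolynomial (Fin n) K) (MvPolynomial (Fin n) K ⧸ I)).colon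
      {Ideal.Quotient.mk I (X c)} = varIdeal K A := by
    have hmem (f : MvPolynomial (Fin n) K) :
        f ∈ (⊥ : Submodule (MvPolynomial (Fin n) K) (MvPolynomial (Fin n) K ⧸ I)).colon
          {Ideal.Quotient.mk I (X c)} ↔ f * X c ∈ I := by
      rw [Submodule.mem_colon_singleton, Submodule.mem_bot, ← Ideal.Quotient.eq_zero_iff_mem]
      rfl
    apply le_antisymm
    · intro f hf
      refine ((varIdeal_isPrime K A).mem_or_mem (hle ((hmem f).1 hf))).resolve_right fun h => ?_
      exact G.irrefl ((hA c).1 (X_mem_varIdeal.1 h))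
    · rw [varIdeal, Ideal.span_le]
      rintro _ ⟨j, hj, rfl⟩
      have hcj := (hA j).1 hj
      refine (hmem _).2 ((mul_mem_iff hI hcj.ne').2 ?_)
      exact ((hG _ _).1 hcj.symm).2
  refine ⟨varIdeal_isPrime K A, Ideal.Quotient.mk I (X c), ?_⟩
  rw [hcolon, (varIdeal_isPrime K A).radical]

/-- Let `I` be a matroidal ideal of degree `2` in `K[x_1, …, x_n]` with
full support, and let `G` be the simple graph on the variables whose edges are the pairs
`{x_i, x_j}` with `x_i x_j ∈ I`.  Then there are positive integers `t_1, …, t_m` with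
`n = t_1 + ⋯ + t_m` such that `G` is the complete multipartite graph `K_{t_1, …, t_m}`.
In particular, if `I` is unmixed then all the `t_i` are equal. -/
theorem statement8 {K : Type*} [Field K] {n : ℕ}
    {I : Ideal (MvPolynomial (Fin n) K)} {B : Finset (Finset (Fin n))}
    (hI : IsMatroidal K I B 2) (hsupp : FullSupport B)
    (G : SimpleGraph (Fin n))
    (hG : ∀ x y : Fin n, G.Adj x y ↔ x ≠ y ∧ (X x * X y : MvPolynomial (Fin n) K) ∈ I) :
    (∃ (m : ℕ) (t : Fin m → ℕ), (∀ i, 0 < t i) ∧ (∑ i, t i) = n ∧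
      Nonempty (G ≃g SimpleGraph.completeMultipartiteGraph fun i : Fin m => Fin (t i))) ∧
    (IsUnmixed I → ∃ (m t : ℕ), 0 < t ∧ m * t = n ∧
      Nonempty (G ≃g SimpleGraph.completeMultipartiteGraph fun _ : Fin m => Fin t)) := by
  classical
  have hGB : ∀ x y, G.Adj x y ↔ x ≠ y ∧ {x, y} ∈ B := fun x y =>
    (hG x y).trans (and_congr_right fun h => mul_mem_iff hI h)
  have hadj : ∀ a b c, G.Adj a c → G.Adj a b ∨ G.Adj b c := fun a b c h =>
    adj_or_adj hI.2.1 hI.2.2.1 hsupp hGB h b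
  have hmult : G.IsCompleteMultipartite :=
    ⟨fun a b c hab hbc hac => (hadj a b c hac).elim hab hbc⟩
  let e := Fintype.equivFin (Quotient hmult.setoid)
  let f : Fin n → Fin (Fintype.card (Quotient hmult.setoid)) := fun x => e (Quotient.mk _ x)
  have hf : ∀ x y, G.Adj x y ↔ f x ≠ f y := fun x y => by
    have h1 : f x = f y ↔ ¬ G.Adj x y :=
      e.injective.eq_iff.trans Quotient.eq
    rw [ne_eq, h1, not_not]
  have hsurj : Function.Surjective f := e.surjective.comp Quotient.mk_surjective
  constructor
  · refine ⟨_, fun i => Fintype.card {x // f x = i}, fun i => ?_,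
      sum_card_and_iso_of_labelling G f hf _ fun _ => rfl⟩
    obtain ⟨x, hx⟩ := hsurj i
    exact Fintype.card_pos_iff.2 ⟨⟨x, hx⟩⟩
  · intro hun
    let N : Fin n → Finset (Fin n) := fun c => Finset.univ.filter (G.Adj c)
    have hN : ∀ c d, (N c).card = (N d).card := fun c d => by
      have h := hun _ (varIdeal_mem_associatedPrimes hI hGB hadj c (N c) (by simp [N]))
        _ (varIdeal_mem_associatedPrimes hI hGB hadj d (N d) (by simp [N]))
      rw [idealHeight_eq_height, idealHeight_eq_height, height_varIdeal, height_varIdeal] at h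
      exact_mod_cast h
    have hfib : ∀ c, Fintype.card {x // f x = f c} = n - (N c).card := fun c => by
      have h : (Finset.univ.filter fun x => f x = f c) = (N c)ᶜ := by
        ext x
        simp [N, hf, eq_comm]
      rw [Fintype.card_subtype, h, Finset.card_compl, Fintype.card_fin]
    obtain ⟨S, hS⟩ := hI.1
    obtain ⟨c, -⟩ := Finset.card_pos.1 (by rw [hI.2.1 S hS]; exact two_pos)
    obtain ⟨hsum, hiso⟩ := sum_card_and_iso_of_labelling G f hf
      (fun _ => Fintype.card {x // f x = f c}) fun i => by
        obtain ⟨d, rfl⟩ := hsurj i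
        rw [hfib, hfib, hN d c]
    exact ⟨_, _, Fintype.card_pos_iff.2 ⟨⟨c, rfl⟩⟩, by simpa using hsum, hiso⟩
end

section
/- Let I ⊆ K[x_1, ..., x_n] be an unmixed matroidal ideal of degree d ≥ 2 with supp(I) = {x_1, ..., x_n}, and let I_1 be the ideal generated by {u/x_1 : u ∈ G(I), x_1 divides u}. If Q_1, ..., Q_s are the minimal primes of I that do not contain x_1, then I_1 = Q_1 ∩ ⋯ ∩ Q_s; in particular, I_1 is an unmixed ideal of the same height as I. -/
/-!
The ideal `Ix` is generated by the bases of the contraction `M / x`, where `M` is the matroid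
whose bases are the members of `B`; write `Q₁, …, Qₛ` for the minimal primes of `I` that do not
contain `x`.  The identity `Ix = ⋂ Qᵢ` is a fact about all matroids without loops.

`Ix ⊆ ⋂ Qᵢ` is clear: a prime containing `x * u` but not `x` contains `u`.  Conversely let
`f ∉ Ix`.  Some monomial of `f` has a support `T` that contains no basis of `M / x`.  As `x` is
not a loop, a basis of `M` inside `T ∪ {x}` could be exchanged for one that contains `x`
(`exists_mem_subset_insert`), so `T ∪ {x}` contains no basis of `M` at all.  Hence the prime `P`
generated by the variables outside `T ∪ {x}` contains `I`, but neither `x` nor `f`, and any minimal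
prime of `I` below `P` is one of the `Qᵢ` and omits `f`.  In this way the minimal primes
of `I` (the cocircuits of `M`) never have to be determined.

For the rest, an associated prime of a finite intersection of primes is one of these primes, so
`Ass (R / Ix)` consists of minimal primes of `I`; these are associated primes of `R / I` and
therefore all have the same height.
-/

open MvPolynomial

/-! ### Exchange -/

/-- If some basis contains `x`, every basis `S` can be turned into a basis that contains `x` and
lies in `S ∪ {x}`. -/
lemma exists_mem_subset_insert {n : ℕ} {B : Finset (Finset (Fin n))} (hB : ExchangeProp B)
    {x : Fin n} {S S' : Finset (Fin n)} (hS : S ∈ B) (hS' : S' ∈ B) (hx : x ∈ S') :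
    ∃ W ∈ B, x ∈ W ∧ W ⊆ insert x S := by
  -- Among the bases through `x`, take one with as few elements outside `S ∪ {x}` as possible.
  obtain ⟨W, hW, hmin⟩ := Finset.exists_min_image (B.filter fun W => x ∈ W)
    (fun W => (W \ insert x S).card) ⟨S', by simp [hS', hx]⟩
  rw [Finset.mem_filter] at hW
  refine ⟨W, hW.1, hW.2, fun i hi => ?_⟩
  by_contra hiS
  rw [Finset.mem_insert, not_or] at hiS
  obtain ⟨j, hjS, hjW, hmem⟩ := hB W hW.1 S hS i hi hiS.2
  refine absurd (hmin (insert j (W.erase i)) ?_) (not_le.2 (Finset.card_lt_card ?_))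
  · simp [hmem, hW.2, Ne.symm hiS.1]
  · refine Finset.ssubset_iff_of_subset (fun k hk => ?_) |>.2 ⟨i, ?_, ?_⟩
    · simp only [Finset.mem_sdiff, Finset.mem_insert, Finset.mem_erase] at hk ⊢
      grind
    · simp [hi, hiS.1, hiS.2]
    · have : i ≠ j := fun h => hjW (h ▸ hi)
      simp [this]

/-! ### Square-free monomial ideals and ideals generated by variables -/

lemma mem_span_sqMon {n : ℕ} {K : Type*} [Field K] (A : Set (Finset (Fin n)))
    (f : MvPolynomial (Fin n) K) :
    f ∈ Ideal.span (sqMon K '' A) ↔ ∀ m ∈ f.support, ∃ S ∈ A, S ⊆ m.support := by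
  have h1 : sqMon K '' A = (fun s => monomial s (1 : K)) ''
      ((fun S : Finset (Fin n) => ∑ i ∈ S, Finsupp.single i 1) '' A) := by
    rw [Set.image_image]
    refine Set.image_congr fun S _ => ?_
    simp only [sqMon, monomial_sum_one]
    rfl
  rw [h1, mem_ideal_span_monomial_image]
  refine forall₂_congr fun m _ => ?_
  rw [Set.exists_mem_image]
  refine exists_congr fun S => and_congr_right fun _ => ?_
  have h2 : ∀ i, (∑ j ∈ S, Finsupp.single j 1 : Fin n →₀ ℕ) i = if i ∈ S then 1 else 0 := by
    intro i
    simp [Finsupp.finsetSum_apply, Finsupp.single_apply]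
  constructor
  · intro h i hi
    have := h i
    rw [h2, if_pos hi] at this
    rw [Finsupp.mem_support_iff]
    omega
  · intro h i
    rw [h2]
    split_ifs with hi
    · have := Finsupp.mem_support_iff.1 (h hi)
      omega
    · exact Nat.zero_le _

/-- The substitution setting the variables outside `U` to zero.  Its kernel is the prime ideal
generated by the variables outside `U`. -/
noncomputable def killOutside {n : ℕ} (K : Type*) [Field K] (U : Finset (Fin n)) :
    MvPolynomial (Fin n) K →ₐ[K] MvPolynomial (Fin n) K :=
  aeval fun i => if i ∈ U then X i else 0

lemma coeff_killOutside {n : ℕ} {K : Type*} [Field K] {U : Finset (Fin n)} {m : Fin n →₀ ℕ}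
    (hm : m.support ⊆ U) (f : MvPolynomial (Fin n) K) :
    coeff m (killOutside K U f) = coeff m f := by
  induction f using MvPolynomial.induction_on' with
  | add p q hp hq => rw [map_add, coeff_add, coeff_add, hp, hq]
  | monomial a c =>
    rw [killOutside, aeval_monomial, algebraMap_eq]
    by_cases ha : a.support ⊆ U
    · rw [monomial_eq]
      congr 2
      refine Finsupp.prod_congr fun i hi => ?_
      rw [if_pos (ha hi)]
    · obtain ⟨i, hi, hiU⟩ := Finset.not_subset.1 ha
      have hne : a ≠ m := fun h => ha (h ▸ hm)
      rw [coeff_monomial, if_neg hne, Finsupp.prod, Finset.prod_eq_zero hi, mul_zero, coeff_zero]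
      rw [if_neg hiU, zero_pow (Finsupp.mem_support_iff.1 hi)]

/-! ### Heights and associated primes -/

lemma idealHeight_prime {A : Type*} [CommRing A] (p : Ideal A) (hp : p.IsPrime) :
    idealHeight p = Order.height (⟨p, hp⟩ : PrimeSpectrum A) :=
  le_antisymm (iInf₂_le (⟨p, hp⟩ : PrimeSpectrum A) le_rfl)
    (le_iInf₂ fun _ hq => Order.height_mono hq)

lemma idealHeight_mono {A : Type*} [CommRing A] {I J : Ideal A} (h : I ≤ J) :
    idealHeight I ≤ idealHeight J :=
  le_iInf₂ fun q hq => iInf₂_le q (h.trans hq)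

open Classical in
lemma mem_of_mem_associatedPrimes_sInf {A : Type*} [CommRing A] [IsNoetherianRing A]
    {S : Set (Ideal A)} (hfin : S.Finite) (hS : ∀ Q ∈ S, Q.IsPrime) {p : Ideal A}
    (hp : p ∈ associatedPrimes A (A ⧸ sInf S)) : p ∈ S := by
  obtain ⟨hprime, y, hy⟩ := isAssociatedPrime_iff.1 hp
  obtain ⟨f, rfl⟩ := Ideal.Quotient.mk_surjective y
  have hmem : ∀ r, r ∈ p ↔ r * f ∈ sInf S := by
    intro r
    rw [hy, Submodule.mem_colon_singleton, Submodule.mem_bot, ← Ideal.Quotient.eq_zero_iff_mem,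
      map_mul, Algebra.smul_def]
    rfl
  -- `p = (⋂ Q) : f` is the intersection of the `Q ∈ S` with `f ∉ Q`.
  have hle : (hfin.toFinset.filter fun Q => f ∉ Q).inf id ≤ p := by
    intro r hr
    rw [hmem, Submodule.mem_sInf]
    intro Q hQ
    by_cases hf : f ∈ Q
    · exact Ideal.mul_mem_left Q r hf
    · exact Ideal.mul_mem_right f Q
        ((Finset.inf_le (f := id) (by simp [hQ, hf] : Q ∈ hfin.toFinset.filter fun Q => f ∉ Q)) hr)
  obtain ⟨Q, hQ, hQp⟩ := hprime.inf_le'.1 hle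
  simp only [Finset.mem_filter, Set.Finite.mem_toFinset] at hQ
  have hpQ : p ≤ Q := fun r hr =>
    ((hS Q hQ.1).mem_or_mem ((Submodule.mem_sInf.1 ((hmem r).1 hr)) Q hQ.1)).resolve_right hQ.2
  rw [le_antisymm hpQ hQp]
  exact hQ.1

/-- Let `I ⊆ K[x_1, …, x_n]` be an unmixed matroidal ideal of degree
`d ≥ 2` with full support, let `x` be one of the variables, and let `I_x` be the ideal
generated by `{u/x : u ∈ G(I), x ∣ u}`.  Then `I_x` is the intersection of the minimal
primes of `I` not containing `x`; in particular `I_x` is unmixed of the same height as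
`I`. -/
theorem statement11 {K : Type*} [Field K] {n d : ℕ} (hd : 2 ≤ d)
    {I : Ideal (MvPolynomial (Fin n) K)} {B : Finset (Finset (Fin n))}
    (hI : IsMatroidal K I B d) (hsupp : FullSupport B) (hun : IsUnmixed I)
    (x : Fin n) (Ix : Ideal (MvPolynomial (Fin n) K))
    (hIx : Ix = Ideal.span (sqMon K ''
      ((((B.filter fun S => x ∈ S).image fun S => S.erase x) : Finset (Finset (Fin n))) :
        Set (Finset (Fin n))))) :
    Ix = sInf {p : Ideal (MvPolynomial (Fin n) K) |
        p ∈ I.minimalPrimes ∧ (X x : MvPolynomial (Fin n) K) ∉ p} ∧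
    IsUnmixed Ix ∧ idealHeight Ix = idealHeight I := by
  classical
  obtain ⟨-, hcard, hex, rfl⟩ := hI
  set I := Ideal.span (sqMon K '' (B : Set (Finset (Fin n)))) with hIdef
  set 𝒬 := {p : Ideal (MvPolynomial (Fin n) K) |
    p ∈ I.minimalPrimes ∧ (X x : MvPolynomial (Fin n) K) ∉ p} with h𝒬
  have hmemIx : ∀ f, f ∈ Ix ↔ ∀ m ∈ f.support, ∃ S ∈ B, x ∈ S ∧ S.erase x ⊆ m.support := by
    intro f
    rw [hIx, mem_span_sqMon]
    refine forall₂_congr fun m _ => ?_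
    simp [and_assoc]
  have hmain : Ix = sInf 𝒬 := by
    apply le_antisymm
    · rw [hIx, Ideal.span_le]
      rintro _ ⟨T, hT, rfl⟩
      simp only [Finset.coe_image, Finset.coe_filter, Set.mem_image, Set.mem_ofPred_eq] at hT
      obtain ⟨S, ⟨hSB, hxS⟩, rfl⟩ := hT
      rw [SetLike.mem_coe, Submodule.mem_sInf]
      rintro p ⟨hp, hxp⟩
      have hSp : sqMon K S ∈ p := hp.1.2 (Ideal.subset_span ⟨S, hSB, rfl⟩)
      have hmul : sqMon K S = X x * sqMon K (S.erase x) := (Finset.mul_prod_erase S _ hxS).symm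
      rw [hmul] at hSp
      exact (hp.1.1.mem_or_mem hSp).resolve_left hxp
    · intro f hf
      by_contra hfIx
      rw [hmemIx] at hfIx
      push Not at hfIx
      obtain ⟨m, hm, hmS⟩ := hfIx
      set P := RingHom.ker (killOutside K (insert x m.support)) with hP
      have hPprime : P.IsPrime := RingHom.ker_isPrime _
      have hIP : I ≤ P := by
        rw [hIdef, Ideal.span_le]
        rintro _ ⟨S, hS, rfl⟩
        have hSU : ¬ S ⊆ insert x m.support := by
          intro hSU
          obtain ⟨S', hS', hxS'⟩ := hsupp x
          obtain ⟨W, hW, hxW, hWS⟩ := exists_mem_subset_insert hex hS hS' hxS'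
          refine hmS W hW hxW fun i hi => ?_
          rw [Finset.mem_erase] at hi
          have h1 := (Finset.mem_insert.1 (hWS hi.2)).resolve_left hi.1
          exact (Finset.mem_insert.1 (hSU h1)).resolve_left hi.1
        obtain ⟨i, hi, hiU⟩ := Finset.not_subset.1 hSU
        rw [SetLike.mem_coe, hP, RingHom.mem_ker, sqMon, map_prod]
        exact Finset.prod_eq_zero hi (by rw [killOutside, aeval_X, if_neg hiU])
      have hxP : (X x : MvPolynomial (Fin n) K) ∉ P := by
        rw [hP, RingHom.mem_ker, killOutside, aeval_X, if_pos (Finset.mem_insert_self _ _)]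
        exact X_ne_zero x
      have hfP : f ∉ P := by
        intro h
        rw [hP, RingHom.mem_ker] at h
        rw [mem_support_iff, ← coeff_killOutside (Finset.subset_insert x m.support) f, h] at hm
        exact hm (coeff_zero m)
      obtain ⟨p, hp, hpP⟩ := Ideal.exists_minimalPrimes_le hIP
      exact hfP (hpP (Submodule.mem_sInf.1 hf p ⟨hp, fun h => hxP (hpP h)⟩))
  have hIxle : I ≤ Ix := by
    rw [hmain]
    exact le_sInf fun p hp => hp.1.1.2
  -- A basis through `x` has `d ≥ 2` elements, so no generator of `Ix` is a unit.
  have hIxtop : Ix ≠ ⊤ := by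
    rw [Ideal.ne_top_iff_one, hmemIx]
    intro h
    obtain ⟨S, hS, hxS, hsub⟩ := h 0 (by simp)
    have h1 := Finset.card_le_card hsub
    rw [Finset.card_erase_of_mem hxS, hcard S hS, Finsupp.support_zero, Finset.card_empty] at h1
    omega
  have hheight : ∀ p ∈ I.minimalPrimes, ∀ q ∈ I.minimalPrimes, idealHeight p = idealHeight q := by
    have hass : I.minimalPrimes ⊆ associatedPrimes _ (MvPolynomial (Fin n) K ⧸ I) := by
      have := Module.associatedPrimes.minimalPrimes_annihilator_subset_associatedPrimes (MvPolynomial (Fin n) K)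
        (MvPolynomial (Fin n) K ⧸ I)
      rwa [Ideal.annihilator_quotient] at this
    exact fun p hp q hq => hun p (hass hp) q (hass hq)
  refine ⟨hmain, ?_, le_antisymm ?_ (idealHeight_mono hIxle)⟩
  · have hass : ∀ p ∈ associatedPrimes _ (MvPolynomial (Fin n) K ⧸ Ix), p ∈ I.minimalPrimes := by
      intro p hp
      rw [hmain] at hp
      exact (mem_of_mem_associatedPrimes_sInf
        ((I.finite_minimalPrimes_of_isNoetherianRing).subset fun _ h => h.1)
        (fun Q hQ => hQ.1.1.1) hp).1
    exact fun p hp q hq => hheight p (hass p hp) q (hass q hq)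
  · obtain ⟨Q, hQ⟩ : 𝒬.Nonempty := by
      rw [Set.nonempty_iff_ne_empty]
      intro h
      rw [h, sInf_empty] at hmain
      exact hIxtop hmain
    refine le_iInf₂ fun q hq => ?_
    have := q.isPrime
    obtain ⟨p, hp, hpq⟩ := Ideal.exists_minimalPrimes_le hq
    calc idealHeight Ix ≤ idealHeight Q := idealHeight_mono (hmain ▸ sInf_le hQ)
      _ = idealHeight p := hheight Q hQ.1 p hp
      _ ≤ idealHeight q.asIdeal := idealHeight_mono hpq
      _ = Order.height q := idealHeight_prime _ q.isPrime
end

section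
/- Let P be a finite subset of a commutative ring R, and let P_0, ..., P_r be subsets of P such that: (i) ⋃_{i=0}^r P_i = P; (ii) P_0 has exactly one element; (iii) if p and p' are different elements of P_i for some 0 < i ≤ r, then there is an integer i' with 0 ≤ i' < i and an element of P_{i'} which divides p·p'. Setting q_i = Σ_{p ∈ P_i} p, one has √(ideal generated by P) = √⟨q_0, ..., q_r⟩. -/
/-!
Write `J = ⟨q_0, …, q_r⟩`. The inclusion `J ⊆ ⟨P⟩` is clear. Conversely, strong induction
on `i` shows `P_i ⊆ √J`: for `p ∈ P_i` the product `p * q_i` lies in `J` and equals `p ^ 2` plus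
cross terms `p * p'` with `p' ≠ p` in `P_i`. Each cross term is a multiple of an element of
an earlier `P_{i'}`, hence lies in `√J`; so `p ^ 2 ∈ √J` and `p ∈ √J`.
-/

open MvPolynomial

/-- **Schmitt–Vogel lemma.** Let `P` be a finite subset of a commutative
ring `R` and `P_0, …, P_r` subsets of `P` such that (i) their union is `P`; (ii) `P_0` has
exactly one element; (iii) if `p ≠ p'` lie in `P_i` with `i > 0`, then some element of some
`P_{i'}` with `i' < i` divides `p·p'`.  With `q_i = Σ_{p ∈ P_i} p` one has
`√(P) = √⟨q_0, …, q_r⟩`. -/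
theorem statement12 {R : Type*} [CommRing R] (P : Finset R) (r : ℕ)
    (Ps : Fin (r + 1) → Finset R)
    (hsub : ∀ i, Ps i ⊆ P)
    (hcover : ∀ p ∈ P, ∃ i, p ∈ Ps i)
    (hcard : (Ps 0).card = 1)
    (hdiv : ∀ i : Fin (r + 1), 0 < (i : ℕ) → ∀ p ∈ Ps i, ∀ p' ∈ Ps i, p ≠ p' →
      ∃ i' : Fin (r + 1), (i' : ℕ) < (i : ℕ) ∧ ∃ q ∈ Ps i', q ∣ p * p') :
    (Ideal.span (P : Set R)).radical
      = (Ideal.span (Set.range fun i => ∑ p ∈ Ps i, p)).radical := by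
  set J : Ideal R := Ideal.span (Set.range fun i => ∑ p ∈ Ps i, p) with hJ
  have key : ∀ n : ℕ, ∀ i : Fin (r + 1), (i : ℕ) = n → ∀ p ∈ Ps i, p ∈ J.radical := by
    intro n
    induction n using Nat.strong_induction_on with
    | _ n ih =>
      intro i hi p hp
      have hq : ∑ p' ∈ Ps i, p' ∈ J.radical :=
        Ideal.le_radical (Ideal.subset_span ⟨i, rfl⟩)
      suffices h : p * p ∈ J.radical by
        refine (Ideal.radical_isRadical J) ⟨2, ?_⟩
        rwa [pow_two]
      classical
      have hmul : p * p + ∑ p' ∈ (Ps i).erase p, p * p' ∈ J.radical := by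
        rw [Finset.add_sum_erase (Ps i) (fun p' => p * p') hp, ← Finset.mul_sum]
        exact Ideal.mul_mem_left _ _ hq
      refine (Ideal.add_mem_iff_left _ (Ideal.sum_mem _ fun p' hp' => ?_)).1 hmul
      obtain ⟨hne, hp'⟩ := Finset.mem_erase.1 hp'
      rcases Nat.eq_zero_or_pos (i : ℕ) with h0 | hpos
      · -- `Ps 0` is a singleton, so there are no cross terms.
        obtain rfl : i = 0 := Fin.ext h0
        exact absurd (Finset.card_le_one.1 hcard.le p' hp' p hp) hne
      · obtain ⟨i', hlt, q, hqm, hdvd⟩ := hdiv i hpos p hp p' hp' hne.symm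
        exact Ideal.mem_of_dvd _ hdvd (ih i' (hi ▸ hlt) i' rfl q hqm)
  apply le_antisymm
  · rw [Ideal.radical_le_radical_iff, Ideal.span_le]
    intro p hp
    obtain ⟨i, hi⟩ := hcover p hp
    exact key i i rfl p hi
  · refine Ideal.radical_mono (Ideal.span_le.2 ?_)
    rintro _ ⟨i, rfl⟩
    exact Ideal.sum_mem _ fun p hp => Ideal.subset_span (hsub i hp)
end

section
/- Let I be a matroidal ideal of degree d in R = K[x_1, ..., x_n]. If ara I ≤ q(I) + 1, then ara I = q(I) + 1. -/
/-!
The variables generating the colon ideal at the generator with support `b` are non-loops of the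
matroid lying outside of `b` (`mem_of_linearQuotient`). Hence it suffices to prove that, for every
base `b`, if `√⟨f_1, …, f_m⟩ = √I` then `m` exceeds the number `r` of non-loops `w_1, …, w_r`
outside of `b` (`card_lt_of_radical_eq`). The proof of this bound is elementary and works over every
field; its core is an algebraic version of Sperner's lemma.

Every base other than `b` contains some `w_l`, so after replacing each `f_i` by a power one can write
`f_i = F_i0 + F_i1 + ⋯ + F_ir` with `x^b ∣ F_i0` and `x_{w_l} ∣ F_il`. A triangular exchange
(`exists_transversal_bases`) provides elements `e_j ∈ b` and, for every set `A` of indices, a base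
`β A` such that `e_j ∉ β A` for `j ∈ A` and `w_j ∉ β A` for `j ∉ A`. Write a power of the generator
`x^{β A}` as `∑ k_i f_i`, and divide: the vector `Y A`, with coordinates
`∑ k_i F_il / (x^{β A})^M` for `l = 0, …, r`, has coordinate sum `1`. For `j ∈ A` the coordinates of
`Y A` have no pole along `x_{e_j}` and coordinate `0` vanishes there; for `j ∉ A` they have no pole
along `x_{w_j}` and the coordinate belonging to `w_j` vanishes there. These are boundary conditions
of Sperner type (`FlagAdmissible`).

For a family of vectors indexed by the subsets of `{1, …, r}`, consider the alternating sum, over the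
maximal flags of subsets, of the determinants of the vectors along the flag (`flagVolume`). Changing
an admissible family at one cardinality changes this sum, by Cramer's rule, by determinants
attached to facets of the flags. Interior facets cancel in pairs. On an outer facet one column
is divisible by a variable `x` while no entry has a pole along `x`, so the determinant is `x` times
such an element, and as a Laurent polynomial it has constant coefficient zero (`constFree`). Thus the
flag volume of an admissible family is independent of the family up to elements of `constFree`
(`flagVolume_sub_mem`), and it is `1` for a suitable family of unit vectors
(`flagVolume_topVector`). As `1` is not in `constFree`, some determinant formed from the `Y A` is
nonzero (`exists_det_ne_zero`). But all the vectors `Y A` are combinations of the `m` vectors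
`(F_i0, …, F_ir)`, so `r + 1 ≤ m`.
-/

open MvPolynomial

/-! ### Flag volumes -/

section Core
open Finset Equiv

/-- The set `{σ 0, …, σ (k - 1)}` of the first `k` values of the permutation `σ`. -/
def initialValues {r : ℕ} (σ : Perm (Fin r)) (k : Fin (r + 1)) : Finset (Fin r) :=
  univ.filter fun j => (σ.symm j : ℕ) < k

lemma mem_initialValues {r : ℕ} (σ : Perm (Fin r)) (k : Fin (r + 1)) (j : Fin r) :
    j ∈ initialValues σ k ↔ (σ.symm j : ℕ) < k := by
  simp [initialValues]

lemma card_initialValues {r : ℕ} (σ : Perm (Fin r)) (k : Fin (r + 1)) :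
    (initialValues σ k).card = k := by
  have : initialValues σ k = (univ.filter fun j : Fin r => (j : ℕ) < k).map σ.toEmbedding := by
    ext j
    simp [initialValues, Finset.mem_map_equiv]
  rw [this, Finset.card_map, Fin.card_filter_val_lt]
  omega

/-- Swapping the values of `σ` at the consecutive positions `a` and `b = a + 1` changes only the
initial segment with `b` elements. -/
lemma initialValues_mul_swap {r : ℕ} (σ : Perm (Fin r)) (a b : Fin r) (hab : (b : ℕ) = a + 1)
    (k : Fin (r + 1)) (hk : (k : ℕ) ≠ b) :
    initialValues (σ * swap a b) k = initialValues σ k := by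
  ext j
  rw [mem_initialValues, mem_initialValues]
  have : (σ * swap a b).symm j = swap a b (σ.symm j) := by
    rw [Equiv.symm_apply_eq]; simp
  rw [this]
  rcases eq_or_ne (σ.symm j) a with h | h
  · rw [h, swap_apply_left]; omega
  rcases eq_or_ne (σ.symm j) b with h' | h'
  · rw [h', swap_apply_right]; omega
  · rw [swap_apply_of_ne_of_ne h h']

/-- The alternating sum, over the maximal flags of subsets of `Fin r`, of the determinants of the
`r + 1` vectors attached to the members of the flag. Up to a constant this is the signed volume of
the image, under `X`, of the triangulation of the `r`-cube whose simplices are the flags. -/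
def flagVolume {L : Type*} [CommRing L] {r : ℕ} (X : Finset (Fin r) → Fin (r + 1) → L) : L :=
  ∑ σ : Perm (Fin r), (Perm.sign σ : ℤ) •
    (Matrix.of fun k => X (initialValues σ k)).det

/-- If the rows of `M` have sum `1` and `u` has sum `0`, then the determinants obtained by putting
`u` in place of a row of `M` add up to `0`; this is Cramer's rule. -/
lemma sum_det_updateRow {L ι : Type*} [CommRing L] [Fintype ι] [DecidableEq ι]
    (M : Matrix ι ι L) (u : ι → L) (hM : ∀ i, ∑ j, M i j = 1) (hu : ∑ j, u j = 0) :
    ∑ i, (M.updateRow i u).det = 0 := by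
  have h := Matrix.mulVec_cramer M.transpose u
  have h2 : ∑ j, (M.transpose.mulVec (M.transpose.cramer u)) j = 0 := by
    rw [h]; simp [← Finset.mul_sum, hu]
  simp only [Matrix.mulVec, dotProduct, Matrix.transpose_apply] at h2
  rw [Finset.sum_comm] at h2
  simp only [← Finset.sum_mul, hM, one_mul, Matrix.cramer_transpose_apply] at h2
  exact h2

lemma det_mem_subring {L ι : Type*} [CommRing L] [Fintype ι] [DecidableEq ι]
    (S : Subring L) (M : Matrix ι ι L) (hM : ∀ i j, M i j ∈ S) : M.det ∈ S := by
  rw [Matrix.det_apply]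
  refine S.sum_mem fun σ _ => ?_
  rw [Units.smul_def]
  exact S.zsmul_mem (S.prod_mem fun i _ => hM _ _) _

lemma det_eq_mul_of_col {L ι : Type*} [CommRing L] [Fintype ι] [DecidableEq ι]
    (S : Subring L) (x : L) (M : Matrix ι ι L) (c : ι) (hM : ∀ i j, M i j ∈ S)
    (hc : ∀ i, ∃ y ∈ S, M i c = x * y) : ∃ y ∈ S, M.det = x * y := by
  choose y hy hxy using hc
  refine ⟨(M.updateCol c y).det, det_mem_subring S _ fun i j => ?_, ?_⟩
  · rw [Matrix.updateCol_apply]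
    split_ifs
    · exact hy i
    · exact hM i j
  · rw [← Matrix.det_updateCol_smul]
    congr 1
    ext i j
    rw [Matrix.updateCol_apply]
    split_ifs with h
    · subst h; simp [hxy]
    · rfl

/-- The boundary conditions, as in Sperner's lemma, on a family of vectors `X A` with coordinate
sum `1`. The vectors attached to the sets containing `j` lie over the subring `S (e j)`, with
coordinate `0` divisible by `x (e j)`; the vectors attached to the sets avoiding `j` lie over
`S (w j)`, with coordinate `j + 1` divisible by `x (w j)`. -/
structure FlagAdmissible {L ι : Type*} [CommRing L] {r : ℕ} (S : ι → Subring L) (x : ι → L)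
    (e w : Fin r → ι) (X : Finset (Fin r) → Fin (r + 1) → L) : Prop where
  sum_eq_one : ∀ A, ∑ i, X A i = 1
  mem_of_mem : ∀ A, ∀ j ∈ A, ∀ i, X A i ∈ S (e j)
  dvd_of_mem : ∀ A, ∀ j ∈ A, ∃ y ∈ S (e j), X A 0 = x (e j) * y
  mem_of_notMem : ∀ A j, j ∉ A → ∀ i, X A i ∈ S (w j)
  dvd_of_notMem : ∀ A j, j ∉ A → ∃ y ∈ S (w j), X A j.succ = x (w j) * y

variable {L ι : Type*} [CommRing L] {r : ℕ} {S : ι → Subring L} {x : ι → L}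
  {e w : Fin r → ι} {N : AddSubgroup L}

/-- Modulo `N`, the flag volume does not change when an admissible family is changed on the sets
with `k` elements: by Cramer's rule the change is a sum over the other facets of the simplices
involved, the interior facets cancel in pairs, and the outer ones contribute elements of `N`. -/
lemma flagVolume_sub_mem_of_level (hN : ∀ i, ∀ y ∈ S i, x i * y ∈ N)
    {X Y : Finset (Fin r) → Fin (r + 1) → L} (hX : FlagAdmissible S x e w X)
    (hY : FlagAdmissible S x e w Y) (k : Fin (r + 1))
    (hXY : ∀ A : Finset (Fin r), A.card ≠ k → X A = Y A) :
    flagVolume Y - flagVolume X ∈ N := by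
  let M : Perm (Fin r) → Matrix (Fin (r + 1)) (Fin (r + 1)) L :=
    fun σ => Matrix.of fun i => X (initialValues σ i)
  let u : Perm (Fin r) → Fin (r + 1) → L :=
    fun σ => Y (initialValues σ k) - X (initialValues σ k)
  have hstep : ∀ σ : Perm (Fin r), (Matrix.of fun i => Y (initialValues σ i)).det - (M σ).det
      = - ∑ i ∈ univ.erase k, ((M σ).updateRow i (u σ)).det := by
    intro σ
    have h0 := sum_det_updateRow (M σ) (u σ) (fun i => hX.sum_eq_one _)
      (by simp [u, Finset.sum_sub_distrib, hX.sum_eq_one, hY.sum_eq_one])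
    rw [← Finset.add_sum_erase _ _ (mem_univ k)] at h0
    have h1 := Matrix.det_updateRow_add (M σ) k (u σ) (X (initialValues σ k))
    have h2 : (M σ).updateRow k (X (initialValues σ k)) = M σ := by
      exact Matrix.updateRow_eq_self (M σ) k
    have h3 : (M σ).updateRow k (u σ + X (initialValues σ k))
        = Matrix.of fun i => Y (initialValues σ i) := by
      ext i j
      rw [Matrix.updateRow_apply]
      split_ifs with h
      · subst h; simp [u]
      · simp only [M, Matrix.of_apply]
        rw [hXY]
        rw [card_initialValues]
        exact fun h' => h (Fin.ext h')
    rw [h2, h3] at h1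
    rw [h1]
    linear_combination h0
  have hsum : flagVolume Y - flagVolume X = - ∑ i ∈ univ.erase k, ∑ σ : Perm (Fin r),
      (Perm.sign σ : ℤ) • ((M σ).updateRow i (u σ)).det := by
    rw [Finset.sum_comm, flagVolume, flagVolume, ← Finset.sum_sub_distrib, ← Finset.sum_neg_distrib]
    refine Finset.sum_congr rfl fun σ _ => ?_
    rw [← smul_sub, ← Finset.smul_sum, ← smul_neg, ← hstep]
  rw [hsum]
  refine N.neg_mem (N.sum_mem fun i hi => ?_)
  have hik : i ≠ k := Finset.ne_of_mem_erase hi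
  rcases Nat.eq_zero_or_pos (i : ℕ) with hi0 | hi0
  · -- the facets opposite to the empty set: all their vertices contain `σ 0`
    refine N.sum_mem fun σ _ => N.zsmul_mem ?_ _
    have hr : 0 < r := by
      have := k.2
      have : (k : ℕ) ≠ i := fun h => hik (Fin.ext h.symm)
      omega
    have hmem : ∀ l : Fin (r + 1), l ≠ i → σ ⟨0, hr⟩ ∈ initialValues σ l := by
      intro l hl
      rw [mem_initialValues, Equiv.symm_apply_apply]
      have : (l : ℕ) ≠ i := fun h => hl (Fin.ext h)
      simp only
      omega
    obtain ⟨y, hy, hdet⟩ := det_eq_mul_of_col (S (e (σ ⟨0, hr⟩))) (x (e (σ ⟨0, hr⟩)))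
      ((M σ).updateRow i (u σ)) 0
      (fun a b => by
        rw [Matrix.updateRow_apply]
        split_ifs with h
        · exact sub_mem (hY.mem_of_mem _ _ (hmem k hik.symm) _)
            (hX.mem_of_mem _ _ (hmem k hik.symm) _)
        · exact hX.mem_of_mem _ _ (hmem a h) _)
      (fun a => by
        rw [Matrix.updateRow_apply]
        split_ifs with h
        · obtain ⟨y, hy, h1⟩ := hY.dvd_of_mem _ _ (hmem k hik.symm)
          obtain ⟨z, hz, h2⟩ := hX.dvd_of_mem _ _ (hmem k hik.symm)
          exact ⟨y - z, sub_mem hy hz, by simp only [u, Pi.sub_apply]; rw [h1, h2]; ring⟩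
        · exact hX.dvd_of_mem _ _ (hmem a h))
    rw [hdet]
    exact hN _ _ hy
  rcases Nat.lt_or_ge (i : ℕ) r with hir | hir
  · -- interior facets are shared by two flags of opposite signs
    have ha : (i : ℕ) - 1 < r := by omega
    have hab : ((⟨i, hir⟩ : Fin r) : ℕ) = (⟨(i : ℕ) - 1, ha⟩ : Fin r) + 1 := by simp; omega
    have hne : (⟨(i : ℕ) - 1, ha⟩ : Fin r) ≠ ⟨i, hir⟩ := by
      intro h; rw [Fin.mk.injEq] at h; omega
    have hswap : ∀ (σ : Perm (Fin r)) (l : Fin (r + 1)), l ≠ i →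
        initialValues (σ * swap ⟨(i : ℕ) - 1, ha⟩ ⟨i, hir⟩) l = initialValues σ l :=
      fun σ l hl => initialValues_mul_swap σ _ _ hab l (fun h => hl (Fin.ext h))
    have : ∑ σ : Perm (Fin r), (Perm.sign σ : ℤ) • ((M σ).updateRow i (u σ)).det = 0 := by
      refine Finset.sum_involution
        (fun σ _ => σ * swap ⟨(i : ℕ) - 1, ha⟩ ⟨i, hir⟩) ?_ ?_ (fun _ _ => mem_univ _) ?_
      · intro σ _
        have h1 : (M (σ * swap ⟨(i : ℕ) - 1, ha⟩ ⟨i, hir⟩)).updateRow i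
            (u (σ * swap ⟨(i : ℕ) - 1, ha⟩ ⟨i, hir⟩)) = (M σ).updateRow i (u σ) := by
          ext a b
          rw [Matrix.updateRow_apply, Matrix.updateRow_apply]
          split_ifs with h
          · simp only [u, hswap σ k hik.symm]
          · simp only [M, Matrix.of_apply, hswap σ a h]
        rw [h1, Perm.sign_mul, Perm.sign_swap hne]
        simp
      · intro σ _ _ h
        have h2 : swap (⟨(i : ℕ) - 1, ha⟩ : Fin r) ⟨i, hir⟩ = 1 := by simpa using h
        exact hne (by simpa [Perm.one_def] using h2)
      · intro σ _
        simp [mul_assoc]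
    rw [this]
    exact N.zero_mem
  · -- the facets opposite to the full set: all their vertices avoid the last value of `σ`
    refine N.sum_mem fun σ _ => N.zsmul_mem ?_ _
    have hr : r - 1 < r := by omega
    have hmem : ∀ l : Fin (r + 1), l ≠ i → σ ⟨r - 1, hr⟩ ∉ initialValues σ l := by
      intro l hl
      rw [mem_initialValues, Equiv.symm_apply_apply]
      have : (l : ℕ) ≠ i := fun h => hl (Fin.ext h)
      have := l.2
      have := i.2
      simp only
      omega
    obtain ⟨y, hy, hdet⟩ := det_eq_mul_of_col (S (w (σ ⟨r - 1, hr⟩))) (x (w (σ ⟨r - 1, hr⟩)))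
      ((M σ).updateRow i (u σ)) (σ ⟨r - 1, hr⟩).succ
      (fun a b => by
        rw [Matrix.updateRow_apply]
        split_ifs with h
        · exact sub_mem (hY.mem_of_notMem _ _ (hmem k hik.symm) _)
            (hX.mem_of_notMem _ _ (hmem k hik.symm) _)
        · exact hX.mem_of_notMem _ _ (hmem a h) _)
      (fun a => by
        rw [Matrix.updateRow_apply]
        split_ifs with h
        · obtain ⟨y, hy, h1⟩ := hY.dvd_of_notMem _ _ (hmem k hik.symm)
          obtain ⟨z, hz, h2⟩ := hX.dvd_of_notMem _ _ (hmem k hik.symm)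
          exact ⟨y - z, sub_mem hy hz, by simp only [u, Pi.sub_apply]; rw [h1, h2]; ring⟩
        · exact hX.dvd_of_notMem _ _ (hmem a h))
    rw [hdet]
    exact hN _ _ hy

/-- Modulo `N`, all admissible families have the same flag volume. -/
lemma flagVolume_sub_mem (hN : ∀ i, ∀ y ∈ S i, x i * y ∈ N)
    {X Y : Finset (Fin r) → Fin (r + 1) → L} (hX : FlagAdmissible S x e w X)
    (hY : FlagAdmissible S x e w Y) : flagVolume Y - flagVolume X ∈ N := by
  -- interpolate by the families `Z k`, equal to `Y` below cardinality `k` and to `X` from there on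
  let Z : ℕ → Finset (Fin r) → Fin (r + 1) → L := fun k A => if A.card < k then Y A else X A
  have hZ : ∀ k, FlagAdmissible S x e w (Z k) := by
    intro k
    constructor
    all_goals
      intro A
      by_cases h : A.card < k
      · simp only [Z, if_pos h]
        first
          | exact hY.sum_eq_one A
          | exact hY.mem_of_mem A
          | exact hY.dvd_of_mem A
          | exact hY.mem_of_notMem A
          | exact hY.dvd_of_notMem A
      · simp only [Z, if_neg h]
        first
          | exact hX.sum_eq_one A
          | exact hX.mem_of_mem A
          | exact hX.dvd_of_mem A
          | exact hX.mem_of_notMem A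
          | exact hX.dvd_of_notMem A
  have key : ∀ k ≤ r + 1, flagVolume (Z k) - flagVolume X ∈ N := by
    intro k
    induction k with
    | zero => intro _; simp [Z, N.zero_mem]
    | succ k ih =>
      intro hk
      have h1 := flagVolume_sub_mem_of_level hN (hZ k) (hZ (k + 1)) ⟨k, by omega⟩ (by
        intro A hA
        simp only at hA
        simp only [Z]
        have : A.card < k + 1 ↔ A.card < k := by omega
        simp only [this])
      have := N.add_mem h1 (ih (by omega))
      simpa using this
  have hlast : Z (r + 1) = Y := by
    funext A
    have : A.card < r + 1 := by
      have := Finset.card_le_univ A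
      simp at this; omega
    simp [Z, this]
  simpa [hlast] using key (r + 1) le_rfl

/-- The index of the last element of `A`, shifted by one, with value `0` at the empty set. -/
noncomputable def topLabel {r : ℕ} (A : Finset (Fin r)) : Fin (r + 1) := A.sup Fin.succ

lemma topLabel_eq_succ {r : ℕ} {A : Finset (Fin r)} {j : Fin r} (h : topLabel A = j.succ) :
    j ∈ A := by
  rcases A.eq_empty_or_nonempty with rfl | hA
  · simp only [topLabel, Finset.sup_empty] at h
    exact absurd h.symm (Fin.succ_ne_zero j)
  · obtain ⟨i, hi, h'⟩ := Finset.exists_mem_eq_sup A hA Fin.succ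
    rw [topLabel, h'] at h
    rwa [← Fin.succ_injective _ h]

lemma topLabel_ne_zero {r : ℕ} {A : Finset (Fin r)} {j : Fin r} (hj : j ∈ A) :
    topLabel A ≠ 0 := by
  have h : j.succ ≤ topLabel A := Finset.le_sup (f := Fin.succ) hj
  intro h0
  rw [h0] at h
  exact Fin.succ_ne_zero j (le_antisymm h (Fin.zero_le _))

/-- The admissible family of unit vectors given by `topLabel`. -/
noncomputable def topVector (L : Type*) [CommRing L] {r : ℕ} (A : Finset (Fin r)) : Fin (r + 1) → L :=
  Pi.single (topLabel A) 1

lemma topVector_admissible : FlagAdmissible S x e w (topVector L (r := r)) where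
  sum_eq_one A := by simp [topVector]
  mem_of_mem A j _ i := by
    rw [topVector, Pi.single_apply]; split_ifs
    · exact one_mem _
    · exact zero_mem _
  dvd_of_mem A j hj := ⟨0, zero_mem _, by
    rw [topVector, Pi.single_eq_of_ne (topLabel_ne_zero hj).symm, mul_zero]⟩
  mem_of_notMem A j _ i := by
    rw [topVector, Pi.single_apply]; split_ifs
    · exact one_mem _
    · exact zero_mem _
  dvd_of_notMem A j hj := ⟨0, zero_mem _, by
    rw [topVector, Pi.single_eq_of_ne (fun h => hj (topLabel_eq_succ h.symm)), mul_zero]⟩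

lemma initialValues_mono {r : ℕ} (σ : Perm (Fin r)) : Monotone (initialValues σ) := by
  intro a b hab j hj
  rw [mem_initialValues] at hj ⊢
  exact lt_of_lt_of_le hj hab

lemma topLabel_mono {r : ℕ} : Monotone (topLabel (r := r)) := fun _ _ h => Finset.sup_mono h

/-- Only the identity contributes to the flag volume of `topVector`: the labels along a flag are
increasing, so if they are distinct they are `0, 1, …, r`. -/
lemma flagVolume_topVector : flagVolume (topVector L (r := r)) = 1 := by
  have hcase : ∀ σ : Perm (Fin r),
      Function.Injective (fun k => topLabel (initialValues σ k)) →
        ∀ k, topLabel (initialValues σ k) = k := by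
    intro σ hinj
    have hs : StrictMono (fun k => topLabel (initialValues σ k)) :=
      (topLabel_mono.comp (initialValues_mono σ)).strictMono_of_injective hinj
    intro k
    have : (fun k => topLabel (initialValues σ k)) = id := by
      exact hs.eq_id
    exact congrFun this k
  have hone : ∀ k, topLabel (initialValues (1 : Perm (Fin r)) k) = k := by
    intro k
    apply le_antisymm
    · refine Finset.sup_le fun j hj => ?_
      rw [mem_initialValues] at hj
      exact Fin.le_def.2 hj
    · rcases Fin.eq_zero_or_eq_succ k with rfl | ⟨j, rfl⟩
      · exact Fin.zero_le _
      · refine Finset.le_sup (f := Fin.succ) (b := j) ?_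
        rw [mem_initialValues]
        exact Nat.lt_succ_self j
  rw [flagVolume, Finset.sum_eq_single 1]
  · have : (Matrix.of fun k => topVector L (initialValues (1 : Perm (Fin r)) k)) = 1 := by
      ext a b
      rw [Matrix.of_apply, topVector, hone, Matrix.one_apply, Pi.single_apply]
      simp only [eq_comm]
    rw [this]; simp
  · intro σ _ hσ
    have hdet : (Matrix.of fun k => topVector L (initialValues σ k)).det = 0 := by
      by_cases hinj : Function.Injective (fun k => topLabel (initialValues σ k))
      · exfalso
        apply hσ
        have h := hcase σ hinj
        -- `j` is the last element of the first `j + 1` values, hence attained at a position `≤ j`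
        have hle : ∀ j, σ.symm j ≤ j := by
          intro j
          have h1 : j ∈ initialValues σ j.succ := topLabel_eq_succ (h j.succ)
          rw [mem_initialValues] at h1
          exact Fin.le_def.2 (by simpa [Nat.lt_succ_iff] using h1)
        have hsymm : ∀ m : ℕ, ∀ j : Fin r, (j : ℕ) = m → σ.symm j = j := by
          intro m
          induction m using Nat.strong_induction_on with
          | _ m ih =>
            intro j hj
            rcases (hle j).lt_or_eq with h1 | h1
            · have h2 := ih (σ.symm j) (by rw [← hj]; exact h1) _ rfl
              exact σ.symm.injective h2
            · exact h1
        ext j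
        have := hsymm j j rfl
        rw [Equiv.symm_apply_eq] at this
        simp [← this]
      · simp only [Function.Injective, not_forall] at hinj
        obtain ⟨a, b, hab, hne⟩ := hinj
        refine Matrix.det_zero_of_row_eq hne ?_
        funext c
        simp only [Matrix.of_apply, topVector]
        rw [hab]
    rw [hdet, smul_zero]
  · simp

/-- If `1 ∉ N`, no admissible family can have all its determinants equal to `0`. -/
lemma exists_det_ne_zero (hN : ∀ i, ∀ y ∈ S i, x i * y ∈ N) (hone : (1 : L) ∉ N)
    {X : Finset (Fin r) → Fin (r + 1) → L} (hX : FlagAdmissible S x e w X) :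
    ∃ A : Fin (r + 1) → Finset (Fin r), (Matrix.of fun k => X (A k)).det ≠ 0 := by
  by_contra! h
  have h1 := flagVolume_sub_mem hN hX (topVector_admissible (L := L))
  have h2 : flagVolume X = 0 := Finset.sum_eq_zero fun σ _ => by rw [h, smul_zero]
  rw [flagVolume_topVector, h2, sub_zero] at h1
  exact hone h1

end Core

/-! ### Bases obtained by a triangular exchange -/

section Bases

/-- The matroid on `Fin n` whose bases are the members of `B`. -/
noncomputable def exchangeMatroid {n : ℕ} (B : Finset (Finset (Fin n))) (hne : B.Nonempty)
    (hB : ExchangeProp B) : Matroid (Fin n) :=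
  Matroid.ofIsBaseOfFinite (E := Set.univ) Set.finite_univ
    (fun T => ∃ S ∈ B, (S : Set (Fin n)) = T)
    (let ⟨S, hS⟩ := hne; ⟨S, S, hS, rfl⟩)
    (by
      rintro _ _ ⟨u, hu, rfl⟩ ⟨v, hv, rfl⟩ a ⟨hau, hav⟩
      obtain ⟨j, hj, hju, h⟩ := hB u hu v hv a hau hav
      exact ⟨j, ⟨hj, hju⟩, _, h, by ext; simp [and_comm]⟩)
    (fun _ _ => Set.subset_univ _)

lemma exchangeMatroid_isBase_iff {n : ℕ} {B : Finset (Finset (Fin n))} (hne : B.Nonempty)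
    (hB : ExchangeProp B) (T : Set (Fin n)) :
    (exchangeMatroid B hne hB).IsBase T ↔ ∃ S ∈ B, (S : Set (Fin n)) = T :=
  Iff.rfl

lemma exchangeMatroid_indep_iff {n : ℕ} {B : Finset (Finset (Fin n))} (hne : B.Nonempty)
    (hB : ExchangeProp B) (T : Set (Fin n)) :
    (exchangeMatroid B hne hB).Indep T ↔ ∃ S ∈ B, T ⊆ S := by
  rw [Matroid.indep_iff]
  simp only [exchangeMatroid_isBase_iff]
  constructor
  · rintro ⟨_, ⟨S, hS, rfl⟩, h⟩
    exact ⟨S, hS, h⟩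
  · rintro ⟨S, hS, h⟩
    exact ⟨S, ⟨S, hS, rfl⟩, h⟩

/-- Let `b` be a base and `w j ∉ b` be non-loops. Order `b` linearly and let `e j ∈ b` be least such
that the elements of `b` up to `e j` span `w j`. Given a set `A` of indices, replace in `b` each
element of the form `e j` with `j ∈ A` by one such `w j`: the result is again a base, by
triangularity, and it contains no `e j` with `j ∈ A`. -/
lemma exists_transversal_bases {n r d : ℕ} {B : Finset (Finset (Fin n))}
    (hB : ExchangeProp B) (hcard : ∀ S ∈ B, S.card = d) {b : Finset (Fin n)} (hb : b ∈ B)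
    (w : Fin r → Fin n) (hwb : ∀ j, w j ∉ b) (hw : ∀ j, ∃ S ∈ B, w j ∈ S) :
    ∃ (e : Fin r → Fin n) (β : Finset (Fin r) → Finset (Fin n)),
      (∀ j, e j ∈ b) ∧ (∀ A, β A ∈ B) ∧ (∀ A, β A ⊆ b ∪ A.image w) ∧
      ∀ A, ∀ j ∈ A, e j ∉ β A := by
  classical
  set M := exchangeMatroid B ⟨b, hb⟩ hB with hM
  have hE : M.E = Set.univ := rfl
  have hindep : ∀ T, M.Indep T ↔ ∃ S ∈ B, T ⊆ (S : Set (Fin n)) :=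
    exchangeMatroid_indep_iff ⟨b, hb⟩ hB
  have hbase : M.IsBase (b : Set (Fin n)) := ⟨b, hb, rfl⟩
  let lo : Fin n → Set (Fin n) := fun e => {x | x ∈ b ∧ x < e}
  let le : Fin n → Set (Fin n) := fun e => {x | x ∈ b ∧ x ≤ e}
  have hle_lo : ∀ x y, x < y → le x ⊆ lo y := fun x y hxy z hz => ⟨hz.1, lt_of_le_of_lt hz.2 hxy⟩
  have hsub : ∀ X : Set (Fin n), X ⊆ M.closure X := fun X => M.subset_closure X
  have hex : ∀ j, ∃ x ∈ b, w j ∈ M.closure (le x) ∧ w j ∉ M.closure (lo x) := by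
    intro j
    -- the condition is upward closed along `b` and holds somewhere
    have hloop : w j ∉ M.closure ∅ := by
      intro h
      obtain ⟨S, hS, hjS⟩ := hw j
      have : M.Indep {w j} := (hindep _).2 ⟨S, hS, by simpa using hjS⟩
      exact (Matroid.indep_singleton.1 this).not_isLoop h
    have hspan : w j ∈ M.closure b := by rw [hbase.closure_eq, hE]; trivial
    let F := b.filter fun x => w j ∈ M.closure (le x)
    have hF : F.Nonempty := by
      rcases b.eq_empty_or_nonempty with h | h
      · exfalso; apply hloop; simpa [h] using hspan
      · refine ⟨b.max' h, Finset.mem_filter.2 ⟨b.max'_mem h, ?_⟩⟩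
        refine M.closure_subset_closure ?_ hspan
        exact fun x hx => ⟨hx, b.le_max' x hx⟩
    have hmin := F.min'_mem hF
    refine ⟨F.min' hF, (Finset.mem_filter.1 hmin).1, (Finset.mem_filter.1 hmin).2, fun h => ?_⟩
    let G := b.filter fun x => x < F.min' hF
    rcases G.eq_empty_or_nonempty with hG | hG
    · apply hloop
      have : lo (F.min' hF) = ∅ := by
        ext x
        simp only [Set.mem_empty_iff_false, iff_false]
        intro hx
        have : x ∈ G := Finset.mem_filter.2 hx
        rw [hG] at this
        exact Finset.notMem_empty _ this
      rwa [this] at h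
    · have hGm := Finset.mem_filter.1 (G.max'_mem hG)
      have hlm : lo (F.min' hF) ⊆ le (G.max' hG) := fun x hx =>
        ⟨hx.1, G.le_max' x (Finset.mem_filter.2 hx)⟩
      have : G.max' hG ∈ F := Finset.mem_filter.2 ⟨hGm.1, M.closure_subset_closure hlm h⟩
      exact absurd hGm.2 (not_lt.2 (F.min'_le _ this))
  choose e heb hele helo using hex
  let t : Finset (Fin r) → Fin n → Fin n := fun A x =>
    if h : ∃ j ∈ A, e j = x then w h.choose else x
  have ht : ∀ A x, x ∈ b → t A x ∈ M.closure (le x) ∧ t A x ∉ M.closure (lo x) := by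
    intro A x hx
    by_cases h : ∃ j ∈ A, e j = x
    · simp only [t, dif_pos h]
      have h1 := hele h.choose
      have h2 := helo h.choose
      rw [h.choose_spec.2] at h1 h2
      exact ⟨h1, h2⟩
    · simp only [t, dif_neg h]
      refine ⟨hsub _ ⟨hx, le_rfl⟩, fun h' => ?_⟩
      refine hbase.indep.notMem_closure_sdiff_of_mem hx (M.closure_subset_closure ?_ h')
      exact fun y hy => ⟨hy.1, hy.2.ne⟩
  have hlt : ∀ A x y, x ∈ b → x < y → t A x ∈ M.closure (lo y) := fun A x y hx hxy =>
    M.closure_subset_closure (hle_lo x y hxy) (ht A x hx).1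
  have hinj : ∀ A, Set.InjOn (t A) b := by
    intro A x hx y hy hxy
    by_contra hne
    rcases lt_or_gt_of_ne hne with h | h
    · exact (ht A y hy).2 (hxy ▸ hlt A x y hx h)
    · exact (ht A x hx).2 (hxy ▸ hlt A y x hy h)
  have hind : ∀ A, ∀ s : Finset (Fin n), s ⊆ b → M.Indep (t A '' s) := by
    intro A s
    induction s using Finset.induction_on_max with
    | empty => intro _; simp
    | insert a s hs ih =>
      intro hsb
      rw [Finset.coe_insert, Set.image_insert_eq]
      have ih' := ih fun x hx => hsb (Finset.mem_insert_of_mem hx)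
      refine (ih'.notMem_closure_iff.1 fun h => ?_).1
      refine (ht A a (hsb (Finset.mem_insert_self _ _))).2 ?_
      refine M.closure_subset_closure_of_subset_closure ?_ h
      rintro _ ⟨x, hx, rfl⟩
      exact hlt A x a (hsb (Finset.mem_insert_of_mem hx)) (hs x hx)
  refine ⟨e, fun A => b.image (t A), heb, fun A => ?_, fun A => ?_, fun A j hj => ?_⟩
  · obtain ⟨S, hS, hsub⟩ := (hindep _).1 (hind A b subset_rfl)
    have h1 : b.image (t A) ⊆ S := by
      rw [← Finset.coe_subset, Finset.coe_image]; exact hsub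
    have h2 : b.image (t A) = S := Finset.eq_of_subset_of_card_le h1 (by
      rw [Finset.card_image_of_injOn (hinj A), hcard S hS, hcard b hb])
    simp only [h2, hS]
  · intro y hy
    obtain ⟨x, hx, rfl⟩ := Finset.mem_image.1 hy
    by_cases h : ∃ j ∈ A, e j = x
    · simp only [t, dif_pos h]
      exact Finset.mem_union_right _ (Finset.mem_image_of_mem _ h.choose_spec.1)
    · simp only [t, dif_neg h]
      exact Finset.mem_union_left _ hx
  · intro hy
    obtain ⟨x, hx, hxe⟩ := Finset.mem_image.1 hy
    by_cases h : ∃ j ∈ A, e j = x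
    · simp only [t, dif_pos h] at hxe
      exact hwb h.choose (hxe ▸ heb j)
    · simp only [t, dif_neg h] at hxe
      exact h ⟨j, hj, hxe.symm⟩

end Bases

/-! ### Constant coefficients of Laurent polynomials -/

section Fractions

/-- The ring `K[x_1, …, x_n]` with all variables other than `x_e` inverted, inside the fraction
field. -/
noncomputable def awaySubring {n : ℕ} (K : Type*) [Field K] (e : Fin n) :
    Subring (FractionRing (MvPolynomial (Fin n) K)) where
  carrier := {y | ∃ (N : ℕ) (p : MvPolynomial (Fin n) K),
    y * algebraMap _ _ (sqMon K (Finset.univ.erase e)) ^ N = algebraMap _ _ p}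
  mul_mem' := by
    rintro y z ⟨N, p, hp⟩ ⟨M, q, hq⟩
    exact ⟨N + M, p * q, by rw [map_mul, ← hp, ← hq]; ring⟩
  one_mem' := ⟨0, 1, by simp⟩
  add_mem' := by
    rintro y z ⟨N, p, hp⟩ ⟨M, q, hq⟩
    refine ⟨N + M, p * sqMon K (Finset.univ.erase e) ^ M + q * sqMon K (Finset.univ.erase e) ^ N, ?_⟩
    rw [map_add, map_mul, map_mul, ← hp, ← hq, map_pow, map_pow]; ring
  zero_mem' := ⟨0, 0, by simp⟩
  neg_mem' := by
    rintro y ⟨N, p, hp⟩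
    exact ⟨N, -p, by rw [map_neg, ← hp]; ring⟩

/-- The Laurent polynomials (in all the variables) whose constant coefficient is zero: the
coefficient is read off in the numerator over any large power of `x_1 ⋯ x_n`. -/
noncomputable def constFree (n : ℕ) (K : Type*) [Field K] :
    AddSubgroup (FractionRing (MvPolynomial (Fin n) K)) where
  carrier := {y | ∃ N₀ : ℕ, ∀ N ≥ N₀, ∃ p : MvPolynomial (Fin n) K,
    y * algebraMap _ _ (sqMon K (Finset.univ : Finset (Fin n))) ^ N = algebraMap _ _ p ∧
      coeff (Finsupp.equivFunOnFinite.symm fun _ => N) p = 0}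
  add_mem' := by
    rintro y z ⟨N₀, hy⟩ ⟨M₀, hz⟩
    refine ⟨max N₀ M₀, fun N hN => ?_⟩
    obtain ⟨p, hp, hp0⟩ := hy N (le_of_max_le_left hN)
    obtain ⟨q, hq, hq0⟩ := hz N (le_of_max_le_right hN)
    exact ⟨p + q, by rw [map_add, ← hp, ← hq]; ring, by rw [coeff_add, hp0, hq0, add_zero]⟩
  zero_mem' := ⟨0, fun N _ => ⟨0, by simp, by simp⟩⟩
  neg_mem' := by
    rintro y ⟨N₀, hy⟩
    refine ⟨N₀, fun N hN => ?_⟩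
    obtain ⟨p, hp, hp0⟩ := hy N hN
    exact ⟨-p, by rw [map_neg, ← hp]; ring, by rw [coeff_neg, hp0, neg_zero]⟩

variable {n : ℕ} {K : Type*} [Field K]

lemma sqMon_eq_monomial (S : Finset (Fin n)) :
    sqMon K S = monomial (∑ i ∈ S, Finsupp.single i 1) 1 := by
  rw [sqMon, monomial_sum_one]
  rfl

lemma sqMon_ne_zero (S : Finset (Fin n)) : sqMon K S ≠ 0 :=
  Finset.prod_ne_zero_iff.2 fun i _ => X_ne_zero i

lemma sqMon_univ_pow (N : ℕ) : sqMon K (Finset.univ : Finset (Fin n)) ^ N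
    = monomial (Finsupp.equivFunOnFinite.symm fun _ => N) 1 := by
  rw [sqMon_eq_monomial, monomial_pow, one_pow]
  congr 2
  ext j
  simp [Finsupp.single_apply]

lemma one_notMem_constFree : (1 : FractionRing (MvPolynomial (Fin n) K)) ∉ constFree n K := by
  rintro ⟨N₀, h⟩
  obtain ⟨p, hp, hp0⟩ := h N₀ le_rfl
  rw [one_mul, ← map_pow] at hp
  rw [← IsFractionRing.injective _ _ hp, sqMon_univ_pow, coeff_monomial, if_pos rfl] at hp0
  exact one_ne_zero hp0

/-- Elements of `awaySubring K e` involve no negative power of `x_e`, so the multiples by `x_e` have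
no constant coefficient. -/
lemma X_mul_mem_constFree (e : Fin n) (y : FractionRing (MvPolynomial (Fin n) K))
    (hy : y ∈ awaySubring K e) :
    algebraMap _ _ (X e : MvPolynomial (Fin n) K) * y ∈ constFree n K := by
  obtain ⟨N₀, p, hp⟩ := hy
  refine ⟨N₀, fun N hN => ⟨X e ^ (N + 1) * (sqMon K (Finset.univ.erase e) ^ (N - N₀) * p), ?_, ?_⟩⟩
  · have h1 : sqMon K (Finset.univ : Finset (Fin n)) = X e * sqMon K (Finset.univ.erase e) :=
      (Finset.mul_prod_erase _ _ (Finset.mem_univ e)).symm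
    obtain ⟨M, rfl⟩ := Nat.exists_eq_add_of_le hN
    rw [h1]
    simp only [map_mul, map_pow, ← hp, Nat.add_sub_cancel_left]
    ring
  · rw [X_pow_eq_monomial, coeff_monomial_mul', if_neg]
    intro h
    have := h e
    simp at this

lemma algebraMap_mem_awaySubring (e : Fin n) (p : MvPolynomial (Fin n) K) :
    algebraMap _ _ p ∈ awaySubring K e := ⟨0, p, by simp⟩

lemma inv_sqMon_mem_awaySubring {e : Fin n} {S : Finset (Fin n)} (he : e ∉ S) :
    (algebraMap _ (FractionRing (MvPolynomial (Fin n) K)) (sqMon K S))⁻¹ ∈ awaySubring K e := by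
  have hS : S ⊆ Finset.univ.erase e := fun i hi =>
    Finset.mem_erase.2 ⟨fun h => he (h ▸ hi), Finset.mem_univ i⟩
  refine ⟨1, sqMon K (Finset.univ.erase e \ S), ?_⟩
  have h1 : sqMon K (Finset.univ.erase e) = sqMon K (Finset.univ.erase e \ S) * sqMon K S :=
    (Finset.prod_sdiff hS).symm
  have h2 : algebraMap _ (FractionRing (MvPolynomial (Fin n) K)) (sqMon K S) ≠ 0 := by
    rw [Ne, FaithfulSMul.algebraMap_eq_zero_iff]
    exact sqMon_ne_zero S
  rw [h1, pow_one, map_mul]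
  field_simp

end Fractions

/-! ### The lower bound for the arithmetical rank -/

section Ara

variable {n : ℕ} {K : Type*} [Field K]

/-- Elements of the ideal split into a multiple of `sqMon K b` and multiples of the variables
`X (w l)`, as every generator other than `sqMon K b` involves one of these variables. -/
lemma exists_split {r : ℕ} {B : Finset (Finset (Fin n))} {b : Finset (Fin n)} (w : Fin r → Fin n)
    (hw : ∀ S ∈ B, S = b ∨ ∃ l, w l ∈ S) (f : MvPolynomial (Fin n) K)
    (hf : f ∈ Ideal.span (sqMon K '' (B : Set (Finset (Fin n))))) :
    ∃ (g₀ : MvPolynomial (Fin n) K) (g : Fin r → MvPolynomial (Fin n) K),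
      f = sqMon K b * g₀ + ∑ l, X (w l) * g l := by
  induction hf using Submodule.span_induction with
  | mem x hx =>
    obtain ⟨S, hS, rfl⟩ := hx
    rcases hw S hS with rfl | ⟨l, hl⟩
    · exact ⟨1, 0, by simp⟩
    · refine ⟨0, Pi.single l (sqMon K (S.erase (w l))), ?_⟩
      rw [Finset.sum_eq_single l]
      · rw [Pi.single_eq_same, mul_zero, zero_add]
        exact (Finset.mul_prod_erase _ _ hl).symm
      · intro j _ hj
        rw [Pi.single_eq_of_ne hj, mul_zero]
      · simp
  | zero => exact ⟨0, 0, by simp⟩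
  | add x y _ _ hx hy =>
    obtain ⟨g₀, g, rfl⟩ := hx
    obtain ⟨h₀, h, rfl⟩ := hy
    refine ⟨g₀ + h₀, g + h, ?_⟩
    simp only [Pi.add_apply, mul_add, Finset.sum_add_distrib]
    ring
  | smul a x _ hx =>
    obtain ⟨g₀, g, rfl⟩ := hx
    refine ⟨a * g₀, fun l => a * g l, ?_⟩
    rw [smul_eq_mul, mul_add, Finset.mul_sum]
    congr 1
    · ring
    · exact Finset.sum_congr rfl fun l _ => by ring

/-- Fix a base `b`. A matroidal ideal is not cut out, up to radical, by as few elements as there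
are non-loops outside of `b`. -/
lemma card_lt_of_radical_eq {d m : ℕ} {I : Ideal (MvPolynomial (Fin n) K)}
    {B : Finset (Finset (Fin n))} (hI : IsMatroidal K I B d) {b : Finset (Fin n)} (hb : b ∈ B)
    (f : Fin m → MvPolynomial (Fin n) K)
    (hf : (Ideal.span (Set.range f)).radical = I.radical)
    (W : Finset (Fin n)) (hW : ∀ i, i ∈ W ↔ (∃ S ∈ B, i ∈ S) ∧ i ∉ b) : W.card < m := by
  classical
  by_contra! hm
  obtain ⟨-, hcard, hB, rfl⟩ := hI
  set r := W.card with hr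
  let w : Fin r → Fin n := W.orderEmbOfFin rfl
  have hwW : ∀ j, w j ∈ W := fun j => W.orderEmbOfFin_mem rfl j
  have hwsurj : ∀ i ∈ W, ∃ l, w l = i := by
    intro i hi
    have := W.range_orderEmbOfFin rfl
    rw [← Finset.mem_coe, ← this] at hi
    exact hi
  have hwinj : Function.Injective w := (W.orderEmbOfFin rfl).injective
  obtain ⟨e, β, heb, hβB, hβ, heβ⟩ := exists_transversal_bases hB hcard hb w
    (fun j => ((hW _).1 (hwW j)).2) (fun j => ((hW _).1 (hwW j)).1)
  have hwβ : ∀ A j, j ∉ A → w j ∉ β A := by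
    intro A j hj h
    rcases Finset.mem_union.1 (hβ A h) with h | h
    · exact ((hW _).1 (hwW j)).2 h
    · obtain ⟨i, hi, hij⟩ := Finset.mem_image.1 h
      exact hj (hwinj hij ▸ hi)
  -- powers of the `f i` lie in the ideal, and they split along `b` and the variables in `W`
  have hpow : ∀ i, ∃ N, f i ^ N ∈ Ideal.span (sqMon K '' (B : Set (Finset (Fin n)))) := by
    intro i
    have : f i ∈ (Ideal.span (Set.range f)).radical :=
      Ideal.le_radical (Ideal.subset_span ⟨i, rfl⟩)
    rw [hf] at this
    exact this
  choose N hN using hpow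
  have hsplit : ∀ i, ∃ F : Fin (r + 1) → MvPolynomial (Fin n) K, ∑ l, F l = f i ^ N i ∧
      sqMon K b ∣ F 0 ∧ ∀ l : Fin r, X (w l) ∣ F l.succ := by
    intro i
    obtain ⟨g₀, g, hg⟩ := exists_split (b := b) w (fun S hS => by
      by_cases h : S ⊆ b
      · exact Or.inl (Finset.eq_of_subset_of_card_le h (by rw [hcard S hS, hcard b hb]))
      · obtain ⟨i, hi, hib⟩ := Finset.not_subset.1 h
        obtain ⟨l, rfl⟩ := hwsurj i ((hW i).2 ⟨⟨S, hS, hi⟩, hib⟩)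
        exact Or.inr ⟨l, hi⟩) _ (hN i)
    refine ⟨Fin.cons (sqMon K b * g₀) fun l => X (w l) * g l, ?_, ?_, fun l => ?_⟩
    · rw [Fin.sum_univ_succ, hg]; simp
    · simp
    · simp
  choose F hFsum hF0 hFs using hsplit
  -- conversely, powers of the generators are combinations of these powers of the `f i`
  have hgen : ∀ A, ∃ (M : ℕ) (k : Fin m → MvPolynomial (Fin n) K),
      sqMon K (β A) ^ M = ∑ i, k i * f i ^ N i := by
    intro A
    have h1 : sqMon K (β A) ∈ (Ideal.span (Set.range f)).radical := by
      rw [hf]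
      exact Ideal.le_radical (Ideal.subset_span ⟨β A, hβB A, rfl⟩)
    have h2 : (Ideal.span (Set.range f)).radical
        ≤ (Ideal.span (Set.range fun i => f i ^ N i)).radical := by
      rw [Ideal.radical_le_radical_iff, Ideal.span_le]
      rintro _ ⟨i, rfl⟩
      exact ⟨N i, Ideal.subset_span ⟨i, rfl⟩⟩
    obtain ⟨M, hM⟩ := h2 h1
    obtain ⟨k, hk⟩ := Ideal.mem_span_range_iff_exists_fun.1 hM
    exact ⟨M, k, hk.symm⟩
  choose M k hk using hgen
  let φ := algebraMap (MvPolynomial (Fin n) K) (FractionRing (MvPolynomial (Fin n) K))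
  let Y : Finset (Fin r) → Fin (r + 1) → FractionRing (MvPolynomial (Fin n) K) :=
    fun A l => φ (∑ i, k A i * F i l) * (φ (sqMon K (β A)))⁻¹ ^ M A
  have hne : ∀ A, φ (sqMon K (β A)) ≠ 0 := by
    intro A
    rw [Ne, FaithfulSMul.algebraMap_eq_zero_iff]
    exact sqMon_ne_zero _
  have hYmem : ∀ A x, x ∉ β A → ∀ l, Y A l ∈ awaySubring K x := fun A x hx l =>
    mul_mem (algebraMap_mem_awaySubring x _) (pow_mem (inv_sqMon_mem_awaySubring hx) _)
  have hYdvd : ∀ A x, x ∉ β A → ∀ l, (∀ i, X x ∣ F i l) →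
      ∃ y ∈ awaySubring K x, Y A l = φ (X x) * y := by
    intro A x hx l h
    obtain ⟨p, hp⟩ : X x ∣ ∑ i, k A i * F i l :=
      Finset.dvd_sum fun i _ => (h i).mul_left _
    refine ⟨φ p * (φ (sqMon K (β A)))⁻¹ ^ M A,
      mul_mem (algebraMap_mem_awaySubring x _) (pow_mem (inv_sqMon_mem_awaySubring hx) _), ?_⟩
    simp only [Y]
    rw [hp, map_mul, mul_assoc]
  have hY : FlagAdmissible (fun x => awaySubring K x) (fun x => φ (X x)) e w Y := by
    refine ⟨fun A => ?_, fun A j hj => hYmem A _ (heβ A j hj),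
      fun A j hj => hYdvd A _ (heβ A j hj) 0 fun i => ?_,
      fun A j hj => hYmem A _ (hwβ A j hj),
      fun A j hj => hYdvd A _ (hwβ A j hj) j.succ fun i => hFs i j⟩
    · simp only [Y]
      rw [← Finset.sum_mul, ← map_sum, Finset.sum_comm]
      simp only [← Finset.mul_sum, hFsum]
      rw [← hk, map_pow, ← mul_pow, mul_inv_cancel₀ (hne A), one_pow]
    · exact (Finset.dvd_prod_of_mem _ (heb j)).trans (hF0 i)
  obtain ⟨A, hA⟩ := exists_det_ne_zero (N := constFree n K)
    (fun x y hy => X_mul_mem_constFree x y hy) one_notMem_constFree hY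
  -- the matrix of the `Y (A a)` factors through a space of dimension `m ≤ r`
  have hfac : (Matrix.of fun a => Y (A a))
      = (Matrix.of fun (a : Fin (r + 1)) (i : Fin m) =>
          φ (k (A a) i) * (φ (sqMon K (β (A a))))⁻¹ ^ M (A a)) *
        Matrix.of fun (i : Fin m) (l : Fin (r + 1)) => φ (F i l) := by
    ext a l
    simp only [Y, Matrix.of_apply, Matrix.mul_apply, map_sum, map_mul, Finset.sum_mul]
    exact Finset.sum_congr rfl fun i _ => by ring
  have hrank := Matrix.rank_of_isUnit (Matrix.of fun a => Y (A a))
    ((Matrix.isUnit_iff_isUnit_det _).2 (isUnit_iff_ne_zero.2 hA))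
  have h1 := Matrix.rank_mul_le_left (Matrix.of fun (a : Fin (r + 1)) (i : Fin m) =>
          φ (k (A a) i) * (φ (sqMon K (β (A a))))⁻¹ ^ M (A a))
        (Matrix.of fun (i : Fin m) (l : Fin (r + 1)) => φ (F i l))
  rw [← hfac, hrank, Fintype.card_fin] at h1
  have h2 := h1.trans (Matrix.rank_le_width _)
  omega

/-- The variables generating the `j`-th colon ideal are non-loops outside of `u j`. -/
lemma mem_of_linearQuotient {d s : ℕ} {B : Finset (Finset (Fin n))} (hcard : ∀ S ∈ B, S.card = d)
    {u : Fin s → Finset (Fin n)} (hu : Function.Injective u)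
    (huB : Set.range u = (B : Set (Finset (Fin n)))) {V : Fin s → Finset (Fin n)}
    (hV : LinearQuotientWitness K u V) {j : Fin s} {i : Fin n} (hi : i ∈ V j) :
    (∃ S ∈ B, i ∈ S) ∧ i ∉ u j := by
  classical
  have huB' : ∀ k, u k ∈ B := fun k => by
    rw [← Finset.mem_coe, ← huB]; exact ⟨k, rfl⟩
  have h1 : (X i : MvPolynomial (Fin n) K) ∈
      Ideal.span ((fun i => (X i : MvPolynomial (Fin n) K)) '' (V j : Set (Fin n))) :=
    Ideal.subset_span ⟨i, hi, rfl⟩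
  rw [← hV j, Submodule.mem_colon] at h1
  have h2 := h1 (sqMon K (u j)) (Ideal.subset_span rfl)
  have himg : sqMon K '' (u '' {k | k < j}) = (fun s : Fin n →₀ ℕ => monomial s (1 : K)) ''
      ((fun S : Finset (Fin n) => ∑ i ∈ S, Finsupp.single i 1) '' (u '' {k | k < j})) := by
    exact (Set.image_congr fun S _ => sqMon_eq_monomial S).trans
      (Set.image_image (fun s : Fin n →₀ ℕ => monomial s (1 : K))
        (fun S : Finset (Fin n) => ∑ i ∈ S, Finsupp.single i 1) _).symm
  rw [smul_eq_mul, himg, mem_ideal_span_monomial_image, sqMon_eq_monomial, X, monomial_mul,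
    one_mul] at h2
  obtain ⟨_, ⟨_, ⟨k, hkj, rfl⟩, rfl⟩, hle⟩ := h2 _ (by
    rw [support_monomial, if_neg one_ne_zero]; exact Finset.mem_singleton_self _)
  have hsub : u k ⊆ insert i (u j) := by
    intro x hx
    by_contra hx'
    rw [Finset.mem_insert, not_or] at hx'
    have := hle x
    simp [Finsupp.finsetSum_apply, Finsupp.single_apply, hx, hx'.2, Ne.symm hx'.1] at this
  have hne : ¬ u k ⊆ u j := fun h => by
    have := Finset.eq_of_subset_of_card_le h (by rw [hcard _ (huB' k), hcard _ (huB' j)])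
    exact (ne_of_lt hkj) (hu this)
  obtain ⟨x, hx, hxj⟩ := Finset.not_subset.1 hne
  rcases Finset.mem_insert.1 (hsub hx) with rfl | h
  · exact ⟨⟨_, huB' k, hx⟩, hxj⟩
  · exact absurd h hxj

end Ara

/-- Let `I` be a matroidal ideal of degree `d` in `K[x_1, …, x_n]`
(with a linear quotient ordering of `G(I)` of index `q(I)`).  If `ara I ≤ q(I) + 1`,
then `ara I = q(I) + 1`. -/
theorem statement14 {K : Type*} [Field K] {n d s : ℕ}
    {I : Ideal (MvPolynomial (Fin n) K)} {B : Finset (Finset (Fin n))}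
    (hI : IsMatroidal K I B d)
    (u : Fin s → Finset (Fin n)) (hu : Function.Injective u)
    (huB : Set.range u = (B : Set (Finset (Fin n))))
    (V : Fin s → Finset (Fin n)) (hV : LinearQuotientWitness K u V)
    (hle : araIdeal I ≤ lqIndex V + 1) :
    araIdeal I = lqIndex V + 1 := by
  classical
  refine le_antisymm hle ?_
  -- the defining set of `araIdeal I` is nonempty, so the infimum is attained
  have hara : araIdeal I ∈ {m : ℕ | ∃ f : Fin m → MvPolynomial (Fin n) K,
      (Ideal.span (Set.range f)).radical = I.radical} := by
    refine Nat.sInf_mem ⟨s, fun k => sqMon K (u k), ?_⟩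
    rw [hI.2.2.2, ← huB, ← Set.range_comp]
    rfl
  obtain ⟨f, hf⟩ := hara
  have hbound : ∀ b ∈ B, ∀ V' : Finset (Fin n), (∀ i ∈ V', (∃ S ∈ B, i ∈ S) ∧ i ∉ b) →
      V'.card < araIdeal I := by
    intro b hb V' hV'
    have h := card_lt_of_radical_eq hI hb f hf
      (Finset.univ.filter fun i => (∃ S ∈ B, i ∈ S) ∧ i ∉ b) (by simp)
    exact lt_of_le_of_lt (Finset.card_le_card fun i hi => by simpa using hV' i hi) h
  obtain ⟨b, hb⟩ := hI.1
  have hpos : 0 < araIdeal I := by simpa using hbound b hb ∅ (by simp)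
  rw [Nat.succ_le_iff, lqIndex, Finset.sup_lt_iff hpos]
  intro j _
  refine hbound (u j) ?_ (V j) fun i hi => mem_of_linearQuotient hI.2.1 hu huB hV hi
  rw [← Finset.mem_coe, ← huB]
  exact ⟨j, rfl⟩
end
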